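/- arXiv:2502.08809 — 2 statements merged into one kernel-verified Lean document; each statement's English description precedes it below -/
import Mathlib

section
/- Suppose condition (C) holds. Let Ω ⊆ E_k be an open set and let Φ : Ω → A be locally bounded in Ω and differentiable in the sense of Gâteaux at every point of Ω. Then Φ is differentiable in the sense of Lorch at every point ζ of Ω, and its Lorch derivative at ζ equals its Gâteaux derivative Φ'_G(ζ). -/
open Filter Topology

/-- Local boundedness of `Φ` on `Ω`: every point of `Ω` has a neighborhood in `Ω`
on which `Φ` is bounded. -/
def IsLocBoundedOn {A : Type*} [NormedCommRing A] [NormedAlgebra ℂ A]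
    {E : Submodule ℝ A} (Ω : Set E) (Φ : E → A) : Prop :=
  ∀ ζ ∈ Ω, ∃ r > (0 : ℝ), ∃ C : ℝ, ∀ z ∈ Ω, ‖z - ζ‖ < r → ‖Φ z‖ ≤ C

/-- Differentiability in the sense of Gâteaux at `ζ` with Gâteaux derivative `g`:
for every `h ∈ E`, `(Φ(ζ + δ h) - Φ(ζ))/δ → h * g` as the real `δ → 0⁺`. -/
def GateauxDiffAt {A : Type*} [NormedCommRing A] [NormedAlgebra ℂ A]
    {E : Submodule ℝ A} (Φ : E → A) (ζ : E) (g : A) : Prop :=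
  ∀ h : E, Tendsto (fun δ : ℝ => δ⁻¹ • (Φ (ζ + δ • h) - Φ ζ))
    (𝓝[>] (0 : ℝ)) (𝓝 ((h : A) * g))

/-- Differentiability in the sense of Lorch at `ζ` (relative to `Ω`) with
Lorch derivative `L`. -/
def LorchDiffAt {A : Type*} [NormedCommRing A] [NormedAlgebra ℂ A]
    {E : Submodule ℝ A} (Ω : Set E) (Φ : E → A) (ζ : E) (L : A) : Prop :=
  ∀ ε > (0 : ℝ), ∃ δ > (0 : ℝ), ∀ h : E, ‖h‖ < δ → ζ + h ∈ Ω →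
    ‖Φ (ζ + h) - Φ ζ - (h : A) * L‖ ≤ ε * ‖h‖

/-- Condition (C): every character of `A` maps `E` onto all of `ℂ`. -/
def CondC {A : Type*} [NormedCommRing A] [NormedAlgebra ℂ A]
    (E : Submodule ℝ A) : Prop :=
  ∀ φ : A →ₐ[ℂ] ℂ, Function.Surjective fun x : E => φ (x : A)

/-!
If the Gâteaux derivative `Φ'` is bounded near a point, then `Φ` is Lipschitz there, and in finite
dimension a Lipschitz function whose line derivatives are linear in the direction is Fréchet
differentiable. So it is enough to bound `Φ'` near each point.

By condition (C), `E` contains a unit `u` and an element `w` such that `a = u⁻¹ w` has no real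
character value. Split `A` into generalized eigenspaces of multiplication by `a`. If `n ^ m * b = 0`
with `n = a - μ`, then on the translates of the plane spanned by `u` and `w`, parametrized by
`v = x + μ y`, the functions `f j = n ^ j b Φ` satisfy `d(f j) = γ j dv + γ (j + 1) dy` with
`γ j = n ^ j b u Φ'` and `f j = 0` for `j ≥ m`. Descending on `j`, subtracting from `f j` the
primitive in `y` of `γ (j + 1)` leaves a locally bounded function that has a complex derivative
along every line, and Tolstov's theorem makes it holomorphic. Hence `f j` is polynomial in `y` with
holomorphic coefficients, and Cauchy's estimates bound `γ 0`, uniformly in the translate.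

For Tolstov's theorem, Baire's theorem provides, near a point of the set `K` where analyticity
fails, Lipschitz bounds at the points of `K` along horizontal and vertical lines. The maximum
principle propagates them to the rectangles cut out by the projections of `K`, so that `f` is
Lipschitz at the points of `K`; the derivative is then bounded and `f` is differentiable.
-/

section LineDerivatives

variable {E F : Type*} [NormedAddCommGroup F] [NormedSpace ℝ F]

theorem hasDerivAt_comp_line [AddCommGroup E] [Module ℝ E] {Φ : E → F} {z v : E} {t : ℝ} {d : F}
    (h : HasLineDerivAt ℝ Φ d (z + t • v) v) :
    HasDerivAt (fun s : ℝ ↦ Φ (z + s • v)) d t := by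
  unfold HasLineDerivAt at h
  rw [← sub_self t] at h
  refine (h.comp_sub_const t t).congr_of_eventuallyEq (Eventually.of_forall fun s ↦ ?_)
  exact congrArg Φ (by module)

variable [NormedAddCommGroup E] [NormedSpace ℝ E]

theorem lipschitzOnWith_of_convex_of_hasLineDerivAt {s : Set E} (hs : Convex ℝ s) {Φ : E → F}
    {D : E → E →L[ℝ] F} {C : NNReal} (hD : ∀ z ∈ s, ‖D z‖ ≤ C)
    (hL : ∀ z ∈ s, ∀ v, HasLineDerivAt ℝ Φ (D z v) z v) : LipschitzOnWith C Φ s := by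
  refine LipschitzOnWith.of_dist_le_mul fun w hw z hz ↦ ?_
  have hmem : ∀ t ∈ Set.Icc (0 : ℝ) 1, z + t • (w - z) ∈ s :=
    fun t ht ↦ hs.add_smul_sub_mem hz hw ht
  have hbound := norm_image_sub_le_of_norm_deriv_le_segment_01' (C := C * ‖w - z‖)
    (fun t ht ↦ (hasDerivAt_comp_line (hL _ (hmem t ht) (w - z))).hasDerivWithinAt)
    fun t ht ↦ (D _).le_of_opNorm_le (hD _ (hmem t ⟨ht.1, ht.2.le⟩)) _
  simpa [dist_eq_norm] using hbound

theorem hasFDerivAt_of_lipschitzOnWith_of_hasLineDerivAt [FiniteDimensional ℝ E]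
    [FiniteDimensional ℝ F] {C : NNReal} {s : Set E} {Φ : E → F} {L : E →L[ℝ] F} {x : E}
    (hΦ : LipschitzOnWith C Φ s) (hs : s ∈ 𝓝 x)
    (hL : ∀ v, HasLineDerivAt ℝ Φ (L v) x v) : HasFDerivAt Φ L x := by
  obtain ⟨Ψ, hΨ, hΦΨ⟩ := hΦ.extend_finite_dimension
  have heq : Φ =ᶠ[𝓝 x] Ψ := eventually_of_mem hs hΦΨ
  exact (hΨ.hasFDerivAt_of_hasLineDerivAt_of_closure (s := Set.univ) (by simp)
    fun v _ ↦ heq.hasLineDerivAt_iff.mp (hL v)).congr_of_eventuallyEq heq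

theorem hasFDerivAt_of_eventually_hasLineDerivAt [FiniteDimensional ℝ E]
    [FiniteDimensional ℝ F] {Φ : E → F} {D : E → E →L[ℝ] F} {x : E} {C : ℝ}
    (hD : ∀ᶠ z in 𝓝 x, ‖D z‖ ≤ C)
    (hL : ∀ᶠ z in 𝓝 x, ∀ v, HasLineDerivAt ℝ Φ (D z v) z v) : HasFDerivAt Φ (D x) x := by
  obtain ⟨r, hr, hball⟩ := Metric.eventually_nhds_iff_ball.mp (hD.and hL)
  have hlip := lipschitzOnWith_of_convex_of_hasLineDerivAt (convex_ball x r) (C := C.toNNReal)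
    (fun z hz ↦ (hball z hz).1.trans C.le_coe_toNNReal) fun z hz ↦ (hball z hz).2
  exact hasFDerivAt_of_lipschitzOnWith_of_hasLineDerivAt hlip (Metric.ball_mem_nhds x hr)
    hL.self_of_nhds

end LineDerivatives

section MaximumPrinciple

theorem le_of_forall_pow_mul_le {x B p D : ℝ} (hp : 0 < p) (hB : 0 ≤ B)
    (h : ∀ n : ℕ, x ^ n * p ≤ B ^ n * D) : x ≤ B := by
  by_contra! hBx
  have hx : 0 < x := hB.trans_lt hBx
  have hlim : Tendsto (fun n : ℕ ↦ (B / x) ^ n * D) atTop (𝓝 (0 * D)) :=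
    (tendsto_pow_atTop_nhds_zero_of_lt_one (by positivity) ((div_lt_one hx).2 hBx)).mul_const D
  rw [zero_mul] at hlim
  refine hp.not_ge (ge_of_tendsto' hlim fun n ↦ ?_)
  rw [div_pow, div_mul_eq_mul_div, le_div_iff₀ (by positivity), mul_comm p]
  exact h n

/-- A polynomial vanishing exactly on the finite set `T`, used to remove singular points. -/
noncomputable def vanishingProd (T : Finset ℂ) (z : ℂ) : ℂ := ∏ t ∈ T, (z - t)

theorem differentiable_vanishingProd (T : Finset ℂ) : Differentiable ℂ (vanishingProd T) := by
  unfold vanishingProd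
  fun_prop

theorem vanishingProd_eq_zero_iff {T : Finset ℂ} {z : ℂ} : vanishingProd T z = 0 ↔ z ∈ T := by
  simp [vanishingProd, Finset.prod_eq_zero_iff, sub_eq_zero]

theorem diffContOnCl_pow_mul_vanishingProd {V : Set ℂ} {T : Finset ℂ} {f : ℂ → ℂ} {A : ℝ}
    (hd : DifferentiableOn ℂ f V)
    (hc : ∀ p ∈ closure V \ T, ContinuousWithinAt f (closure V) p)
    (hA : ∀ p ∈ closure V, ‖f p‖ ≤ A) (n : ℕ) :
    DiffContOnCl ℂ (fun z ↦ f z ^ n * vanishingProd T z) V := by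
  have hP := differentiable_vanishingProd T
  refine ⟨(hd.pow n).mul hP.differentiableOn, fun p hp ↦ ?_⟩
  by_cases hpT : p ∈ T
  · have hP0 : Tendsto (vanishingProd T) (𝓝[closure V] p) (𝓝 0) :=
      vanishingProd_eq_zero_iff.2 hpT ▸ hP.continuous.continuousWithinAt
    have hfb : ∀ᶠ z in 𝓝[closure V] p, ‖f z ^ n‖ ≤ A ^ n := by
      filter_upwards [self_mem_nhdsWithin] with z hz
      rw [norm_pow]
      gcongr
      exact hA z hz
    simpa [ContinuousWithinAt, vanishingProd_eq_zero_iff.2 hpT] using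
      isBoundedUnder_le_mul_tendsto_zero (isBoundedUnder_of_eventually_le hfb) hP0
  · exact ((hc p ⟨hp, hpT⟩).pow n).mul hP.continuous.continuousWithinAt

theorem norm_le_of_forall_mem_frontier_diff_finset {V : Set ℂ}
    (hV : Bornology.IsBounded V) {T : Finset ℂ} {f : ℂ → ℂ} {A B : ℝ} (hB : 0 ≤ B)
    (hd : DifferentiableOn ℂ f V)
    (hc : ∀ p ∈ closure V \ T, ContinuousWithinAt f (closure V) p)
    (hA : ∀ p ∈ closure V, ‖f p‖ ≤ A) (hfB : ∀ p ∈ frontier V \ T, ‖f p‖ ≤ B)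
    {w : ℂ} (hw : w ∈ closure V \ T) : ‖f w‖ ≤ B := by
  obtain ⟨D, hD⟩ := hV.isCompact_closure.exists_bound_of_continuousOn
    (differentiable_vanishingProd T).continuous.continuousOn
  have hD0 : 0 ≤ D := (norm_nonneg _).trans (hD w hw.1)
  -- `‖f ^ n * P‖ ≤ B ^ n * D` on the frontier, hence at `w`; then let `n → ∞`
  refine le_of_forall_pow_mul_le (p := ‖vanishingProd T w‖) (D := D)
    (norm_pos_iff.2 (vanishingProd_eq_zero_iff.not.2 hw.2)) hB fun n ↦ ?_
  rw [← norm_pow, ← norm_mul]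
  refine Complex.norm_le_of_forall_mem_frontier_norm_le hV
    (diffContOnCl_pow_mul_vanishingProd hd hc hA n) (fun p hp ↦ ?_) hw.1
  rw [norm_mul, norm_pow]
  by_cases hpT : p ∈ T
  · rw [vanishingProd_eq_zero_iff.2 hpT]
    simp only [norm_zero, mul_zero]
    positivity
  · gcongr
    · exact hfB p ⟨hp, hpT⟩
    · exact hD p (frontier_subset_closure hp)

theorem norm_le_of_rectangle_sides {f : ℂ → ℂ} {a b c d A B : ℝ} (hB : 0 ≤ B)
    (hA : ∀ p ∈ Set.Icc a b ×ℂ Set.Icc c d, ‖f p‖ ≤ A)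
    (hd : ∀ p ∈ Set.Icc a b ×ℂ Set.Icc c d, p.re ∈ Set.Ioo a b ∨ p.im ∈ Set.Ioo c d →
      DifferentiableAt ℂ f p)
    (hre : ∀ p ∈ Set.Icc a b ×ℂ Set.Icc c d, p.re = a ∨ p.re = b → ‖f p‖ ≤ B)
    (him : ∀ p ∈ Set.Icc a b ×ℂ Set.Icc c d, p.im = c ∨ p.im = d → ‖f p‖ ≤ B)
    {w : ℂ} (hw : w ∈ Set.Ioo a b ×ℂ Set.Ioo c d) : ‖f w‖ ≤ B := by
  have hab : a < b := hw.1.1.trans hw.1.2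
  have hcd : c < d := hw.2.1.trans hw.2.2
  set V : Set ℂ := Set.Ioo a b ×ℂ Set.Ioo c d with hV
  have hcl : closure V = Set.Icc a b ×ℂ Set.Icc c d := by
    rw [hV, Complex.closure_reProdIm, closure_Ioo hab.ne, closure_Ioo hcd.ne]
  have hVcl : V ⊆ Set.Icc a b ×ℂ Set.Icc c d := hcl ▸ subset_closure
  set T : Finset ℂ := {⟨a, c⟩, ⟨a, d⟩, ⟨b, c⟩, ⟨b, d⟩} with hT
  have hcorner : ∀ p ∈ closure V \ T, p.re ∈ Set.Ioo a b ∨ p.im ∈ Set.Ioo c d := by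
    rintro p ⟨hp, hpT⟩
    rw [hcl] at hp
    simp only [hT, Finset.coe_insert, Finset.coe_singleton, Set.mem_insert_iff,
      Set.mem_singleton_iff, Complex.ext_iff] at hpT
    obtain ⟨⟨h1, h2⟩, h3, h4⟩ := hp
    grind
  refine norm_le_of_forall_mem_frontier_diff_finset (T := T)
    ((Metric.isBounded_Ioo a b).reProdIm (Metric.isBounded_Ioo c d)) hB
    (fun p hp ↦ (hd p (hVcl hp) (.inl hp.1)).differentiableWithinAt)
    (fun p hp ↦ (hd p (hcl ▸ hp.1) (hcorner p hp)).continuousAt.continuousWithinAt)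
    (hcl ▸ hA) (fun p hp ↦ ?_) ⟨subset_closure hw, fun h ↦ ?_⟩
  · have hpV : p ∉ V := by
      rw [(isOpen_Ioo.reProdIm isOpen_Ioo).frontier_eq] at hp
      exact hp.1.2
    have hpc : p ∈ Set.Icc a b ×ℂ Set.Icc c d := hcl ▸ frontier_subset_closure hp.1
    have hside : (p.re = a ∨ p.re = b) ∨ p.im = c ∨ p.im = d := by
      obtain ⟨⟨h1, h2⟩, _, _⟩ := hpc
      simp only [hV, Complex.mem_reProdIm, Set.mem_Ioo] at hpV
      grind
    exact hside.elim (hre p hpc) (him p hpc)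
  · simp only [hT, Finset.coe_insert, Finset.coe_singleton, Set.mem_insert_iff,
      Set.mem_singleton_iff, Complex.ext_iff] at h
    obtain ⟨⟨h1, h2⟩, _, _⟩ := hw
    grind

end MaximumPrinciple

section Grid

theorem exists_gap {α : Type*} [ConditionallyCompleteLinearOrder α] [TopologicalSpace α]
    [OrderTopology α] {X : Set α} (hX : IsClosed X) {x l u : α} (hx : x ∉ X)
    (hl : l ∈ X) (hlx : l < x) (hu : u ∈ X) (hxu : x < u) :
    ∃ a ∈ X, ∃ b ∈ X, x ∈ Set.Ioo a b ∧ Disjoint (Set.Ioo a b) X := by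
  have hbelow : sSup (X ∩ Set.Iic x) ∈ X ∩ Set.Iic x :=
    (hX.inter isClosed_Iic).csSup_mem ⟨l, hl, hlx.le⟩ ⟨x, fun _ h ↦ h.2⟩
  have habove : sInf (X ∩ Set.Ici x) ∈ X ∩ Set.Ici x :=
    (hX.inter isClosed_Ici).csInf_mem ⟨u, hu, hxu.le⟩ ⟨x, fun _ h ↦ h.2⟩
  refine ⟨_, hbelow.1, _, habove.1, ⟨lt_of_le_of_ne hbelow.2 fun h ↦ hx (h ▸ hbelow.1),
    lt_of_le_of_ne habove.2 fun h ↦ hx (h ▸ habove.1)⟩,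
    Set.disjoint_left.2 fun t ht htX ↦ ?_⟩
  rcases le_total t x with h | h
  · exact ht.1.not_ge (le_csSup ⟨x, fun _ h ↦ h.2⟩ ⟨htX, h⟩)
  · exact ht.2.not_ge (csInf_le ⟨x, fun _ h ↦ h.2⟩ ⟨htX, h⟩)

theorem exists_forall_mul_sub_eq_abs_sub {a b x₀ : ℝ} (h : x₀ ∉ Set.Ioo a b) :
    ∃ σ : ℝ, ∀ t ∈ Set.Icc a b, σ * (t - x₀) = |t - x₀| := by
  rcases le_or_gt x₀ a with ha | ha
  · exact ⟨1, fun t ht ↦ by rw [one_mul, abs_of_nonneg (by linarith [ht.1])]⟩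
  · have hb : b ≤ x₀ := not_lt.1 fun hb ↦ h ⟨ha, hb⟩
    exact ⟨-1, fun t ht ↦ by rw [neg_one_mul, abs_of_nonpos (by linarith [ht.2])]⟩

theorem exists_gap_of_mem_ball {X : Set ℝ} (hX : IsClosed X) {x₀ x s : ℝ} (hx₀ : x₀ ∈ X)
    (hx : x ∉ X) (hxs : x ∈ Metric.ball x₀ s) :
    ∃ a b σ : ℝ, x ∈ Set.Ioo a b ∧ Set.Icc a b ⊆ Metric.closedBall x₀ s ∧
      Disjoint (Set.Ioo a b) X ∧ (∀ t, t = a ∨ t = b → t ∈ X ∨ |t - x₀| = s) ∧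
      ∀ t ∈ Set.Icc a b, σ * (t - x₀) = |t - x₀| := by
  rw [Real.ball_eq_Ioo] at hxs
  have hs : 0 < s := by linarith [hxs.1.trans hxs.2]
  have hx' : x ∉ X ∪ {x₀ - s, x₀ + s} := by
    simpa [hx] using And.intro hxs.1.ne' hxs.2.ne
  obtain ⟨a, ha, b, hb, hxab, hdis⟩ := exists_gap
    (hX.union (Set.toFinite {x₀ - s, x₀ + s}).isClosed) hx' (by simp) hxs.1 (by simp) hxs.2
  have hgap : ∀ t ∈ X ∪ {x₀ - s, x₀ + s}, t ≤ a ∨ b ≤ t := fun t ht ↦ by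
    by_contra! h
    exact Set.disjoint_left.1 hdis h ht
  have hend : ∀ t ∈ X ∪ {x₀ - s, x₀ + s}, t ∈ X ∨ |t - x₀| = s := by
    rintro t (ht | rfl | rfl)
    · exact .inl ht
    · right; simp [abs_of_pos hs]
    · right; simp [abs_of_pos hs]
  obtain ⟨σ, hσ⟩ := exists_forall_mul_sub_eq_abs_sub (a := a) (b := b) (x₀ := x₀)
    fun h ↦ Set.disjoint_left.1 hdis h (.inl hx₀)
  refine ⟨a, b, σ, hxab, ?_, hdis.mono_right Set.subset_union_left, ?_, hσ⟩
  · rw [Real.closedBall_eq_Icc]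
    refine Set.Icc_subset_Icc ?_ ?_
    · exact (hgap _ (by simp)).resolve_right fun h ↦ (hxab.2.trans_le h).not_gt hxs.1
    · exact (hgap _ (by simp)).resolve_left fun h ↦ (h.trans_lt hxab.1).not_gt hxs.2
  · rintro t (rfl | rfl)
    · exact hend t ha
    · exact hend t hb

/-- The closed square with centre `c` and side length `2 * s`. -/
def closedSquare (c : ℂ) (s : ℝ) : Set ℂ := Metric.closedBall c.re s ×ℂ Metric.closedBall c.im s

theorem mem_closedSquare {c p : ℂ} {s : ℝ} :
    p ∈ closedSquare c s ↔ |p.re - c.re| ≤ s ∧ |p.im - c.im| ≤ s := Iff.rfl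

theorem closedSquare_subset_closedSquare {c : ℂ} {s t : ℝ} (h : s ≤ t) :
    closedSquare c s ⊆ closedSquare c t :=
  fun _ hp ↦ ⟨hp.1.trans h, hp.2.trans h⟩

/-- The auxiliary holomorphic factor of the grid estimate. Where `σ` and `τ` are the signs of the
coordinates of `p - c`, its norm decays exponentially in the `ℓ¹` distance from `c`; the base `16`
makes it `1 / 16` at distance `s` and `1 / 4` at distance `s / 2`. -/
noncomputable def squareWeight (c : ℂ) (s σ τ : ℝ) (p : ℂ) : ℂ :=
  16 ^ (-((σ - τ * Complex.I) * (p - c)) / s)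

theorem differentiable_squareWeight (c : ℂ) (s σ τ : ℝ) :
    Differentiable ℂ (squareWeight c s σ τ) := by
  unfold squareWeight
  exact fun p ↦ DifferentiableAt.const_cpow (by fun_prop) (.inl (by norm_num))

section SquareWeight

variable {c p : ℂ} {s σ τ : ℝ}

theorem norm_squareWeight (hσ : σ * (p.re - c.re) = |p.re - c.re|)
    (hτ : τ * (p.im - c.im) = |p.im - c.im|) :
    ‖squareWeight c s σ τ p‖ = 16 ^ (-(|p.re - c.re| + |p.im - c.im|) / s) := by
  rw [squareWeight, ← Complex.ofReal_ofNat,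
    Complex.norm_cpow_eq_rpow_re_of_pos (by norm_num), Complex.div_ofReal_re, ← hσ, ← hτ]
  congr 2
  simp

theorem norm_squareWeight_le_one (hs : 0 < s) (hσ : σ * (p.re - c.re) = |p.re - c.re|)
    (hτ : τ * (p.im - c.im) = |p.im - c.im|) : ‖squareWeight c s σ τ p‖ ≤ 1 := by
  rw [norm_squareWeight hσ hτ, neg_div]
  exact Real.rpow_le_one_of_one_le_of_nonpos (by norm_num) (neg_nonpos.2 (by positivity))

theorem norm_squareWeight_le (hs : 0 < s) (hσ : σ * (p.re - c.re) = |p.re - c.re|)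
    (hτ : τ * (p.im - c.im) = |p.im - c.im|) (hp : |p.re - c.re| = s ∨ |p.im - c.im| = s) :
    ‖squareWeight c s σ τ p‖ ≤ 1 / 16 := by
  rw [norm_squareWeight hσ hτ, one_div, ← Real.rpow_neg_one]
  gcongr
  · norm_num
  · rw [div_le_iff₀ hs]
    rcases hp with hp | hp <;> linarith [abs_nonneg (p.re - c.re), abs_nonneg (p.im - c.im)]

theorem le_norm_squareWeight (hs : 0 < s) (hσ : σ * (p.re - c.re) = |p.re - c.re|)
    (hτ : τ * (p.im - c.im) = |p.im - c.im|) (hp : p ∈ closedSquare c (s / 4)) :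
    1 / 4 ≤ ‖squareWeight c s σ τ p‖ := by
  have hquarter : (1 / 4 : ℝ) = 16 ^ (-(1 / 2) : ℝ) := by
    rw [Real.rpow_neg (by norm_num), ← Real.sqrt_eq_rpow, show (16 : ℝ) = 4 ^ 2 by norm_num,
      Real.sqrt_sq (by norm_num), one_div]
  rw [norm_squareWeight hσ hτ, hquarter]
  gcongr
  · norm_num
  · rw [le_div_iff₀ hs]
    linarith [(mem_closedSquare.1 hp).1, (mem_closedSquare.1 hp).2]

end SquareWeight

theorem norm_le_of_grid {φ : ℂ → ℂ} {X Y : Set ℝ} {c w : ℂ} {s A : ℝ} (hs : 0 < s)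
    (hX : IsClosed X) (hY : IsClosed Y) (hcX : c.re ∈ X) (hcY : c.im ∈ Y)
    (hA : ∀ p ∈ closedSquare c s, ‖φ p‖ ≤ A)
    (hgrid : ∀ p ∈ closedSquare c s, p.re ∈ X ∨ p.im ∈ Y → ‖φ p‖ ≤ A / 16)
    (hd : ∀ p ∈ closedSquare c s, p.re ∉ X ∨ p.im ∉ Y → DifferentiableAt ℂ φ p)
    (hw : w ∈ closedSquare c (s / 4)) : ‖φ w‖ ≤ A / 4 := by
  have hws : w ∈ closedSquare c s := closedSquare_subset_closedSquare (by linarith) hw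
  have hA0 : 0 ≤ A := (norm_nonneg _).trans (hA w hws)
  by_cases hwXY : w.re ∈ X ∨ w.im ∈ Y
  · linarith [hgrid w hws hwXY]
  push Not at hwXY
  obtain ⟨a, b, σ, hab, habs, habX, habend, hσ⟩ := exists_gap_of_mem_ball (s := s) hX hcX hwXY.1
    (Metric.closedBall_subset_ball (by linarith) hw.1)
  obtain ⟨a', b', τ, hab', habs', habY, habend', hτ⟩ := exists_gap_of_mem_ball (s := s) hY hcY
    hwXY.2 (Metric.closedBall_subset_ball (by linarith) hw.2)
  have hR : Set.Icc a b ×ℂ Set.Icc a' b' ⊆ closedSquare c s :=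
    fun p hp ↦ ⟨habs hp.1, habs' hp.2⟩
  set ψ : ℂ → ℂ := fun p ↦ φ p * squareWeight c s σ τ p
  have hψA : ∀ p ∈ Set.Icc a b ×ℂ Set.Icc a' b', ‖ψ p‖ ≤ ‖φ p‖ := fun p hp ↦ by
    simpa [ψ] using mul_le_of_le_one_right (norm_nonneg _)
      (norm_squareWeight_le_one hs (hσ _ hp.1) (hτ _ hp.2))
  have hside : ∀ p ∈ Set.Icc a b ×ℂ Set.Icc a' b',
      (p.re ∈ X ∨ |p.re - c.re| = s) ∨ (p.im ∈ Y ∨ |p.im - c.im| = s) → ‖ψ p‖ ≤ A / 16 := by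
    intro p hp h
    by_cases hp' : p.re ∈ X ∨ p.im ∈ Y
    · exact (hψA p hp).trans (hgrid p (hR hp) hp')
    · rw [norm_mul, ← mul_one_div]
      gcongr
      · exact hA p (hR hp)
      · exact norm_squareWeight_le hs (hσ _ hp.1) (hτ _ hp.2) (by tauto)
  have hψw : ‖ψ w‖ ≤ A / 16 := norm_le_of_rectangle_sides (by positivity)
    (fun p hp ↦ (hψA p hp).trans (hA p (hR hp)))
    (fun p hp h ↦ (hd p (hR hp) (h.imp (habX.notMem_of_mem_left ·)
      (habY.notMem_of_mem_left ·))).mul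
      (differentiable_squareWeight _ _ _ _ p))
    (fun p hp h ↦ hside p hp (.inl (habend _ h))) (fun p hp h ↦ hside p hp (.inr (habend' _ h)))
    ⟨hab, hab'⟩
  have hweight := le_norm_squareWeight hs (hσ _ (Set.Ioo_subset_Icc_self hab))
    (hτ _ (Set.Ioo_subset_Icc_self hab')) hw
  rw [norm_mul] at hψw
  linarith [mul_le_mul_of_nonneg_left hweight (norm_nonneg (φ w))]

end Grid

section Cross

/-- The union of the horizontal and the vertical line through `z`. -/
def cross (z : ℂ) : Set ℂ := {w | w.re = z.re ∨ w.im = z.im}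

theorem norm_sub_of_mem_cross {z w : ℂ} (h : w ∈ cross z) :
    ‖w - z‖ = |w.re - z.re| + |w.im - z.im| := by
  rcases h with h | h
  · simpa [h] using (Complex.abs_im_eq_norm (z := w - z)).2 (by simp [h]) |>.symm
  · simpa [h] using (Complex.abs_re_eq_norm (z := w - z)).2 (by simp [h]) |>.symm

theorem exists_continuous_mem_cross_inter_cross {z w : ℂ} (h : w ∈ cross z) :
    ∃ q : ℂ → ℂ, Continuous q ∧ q z = w ∧ ∀ u, q u ∈ cross u ∩ cross w := by
  rcases h with h | h
  · exact ⟨fun u ↦ u.re + w.im * Complex.I, by fun_prop, by simp [← h],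
      fun u ↦ ⟨.inl (by simp), .inr (by simp)⟩⟩
  · exact ⟨fun u ↦ w.re + u.im * Complex.I, by fun_prop, by simp [← h],
      fun u ↦ ⟨.inr (by simp), .inl (by simp)⟩⟩

variable {F : Type*} [NormedAddCommGroup F]

/-- `f` satisfies a Lipschitz bound at `z`, with constant `N` and up to distance `δ`, along the
horizontal and the vertical line through `z`. -/
def CrossLipschitzAt (f : ℂ → F) (N δ : ℝ) (z : ℂ) : Prop :=
  ∀ w ∈ cross z ∩ Metric.ball z δ, ‖f w - f z‖ ≤ N * ‖w - z‖

namespace CrossLipschitzAt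

variable {f : ℂ → F} {N δ : ℝ} {z : ℂ}

theorem mono (h : CrossLipschitzAt f N δ z) {N' δ' : ℝ} (hN : N ≤ N') (hδ : δ' ≤ δ) :
    CrossLipschitzAt f N' δ' z :=
  fun w hw ↦ (h w ⟨hw.1, Metric.ball_subset_ball hδ hw.2⟩).trans (by gcongr)

theorem continuousWithinAt (h : CrossLipschitzAt f N δ z) (hδ : 0 < δ) :
    ContinuousWithinAt f (cross z) z := by
  have hlim : Tendsto (fun w ↦ N * ‖w - z‖) (𝓝[cross z] z) (𝓝 0) :=
    tendsto_nhdsWithin_of_tendsto_nhds <| Continuous.tendsto' (by fun_prop) z 0 (by simp)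
  refine tendsto_iff_norm_sub_tendsto_zero.2 (squeeze_zero' (.of_forall fun _ ↦ norm_nonneg _)
    ?_ hlim)
  filter_upwards [inter_mem_nhdsWithin _ (Metric.ball_mem_nhds z hδ)] with w hw using h w hw

theorem norm_sub_le {k p : ℂ} {s : ℝ} (hz : CrossLipschitzAt f N δ z)
    (hk : CrossLipschitzAt f N δ k) (hN : 0 ≤ N) (hδ : 2 * s < δ) (hks : k ∈ closedSquare z s)
    (hps : p ∈ closedSquare z s) (hpk : p ∈ cross k) : ‖f p - f z‖ ≤ 4 * N * s := by
  rw [mem_closedSquare] at hks hps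
  have hs : 0 ≤ s := (abs_nonneg _).trans hks.1
  have hcross : ∀ {x y : ℂ} {r : ℝ}, CrossLipschitzAt f N δ x → r ≤ 2 * s → y ∈ cross x →
      |y.re - x.re| + |y.im - x.im| ≤ r → ‖f y - f x‖ ≤ N * r := by
    intro x y r hx hr hy hyx
    rw [← norm_sub_of_mem_cross hy] at hyx
    exact (hx y ⟨hy, mem_ball_iff_norm.2 (by linarith)⟩).trans (by gcongr)
  set q : ℂ := ⟨k.re, z.im⟩
  have hqz : ‖f q - f z‖ ≤ N * s := hcross hz (by linarith) (.inr rfl) (by simpa [q] using hks.1)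
  have hqk : ‖f q - f k‖ ≤ N * s :=
    hcross hk (by linarith) (.inl rfl) (by simpa [q, abs_sub_comm] using hks.2)
  have hpk' : ‖f p - f k‖ ≤ N * (2 * s) := by
    refine hcross hk le_rfl hpk ?_
    have h1 := abs_sub_le p.re z.re k.re
    have h2 := abs_sub_le p.im z.im k.im
    rw [abs_sub_comm z.re] at h1
    rw [abs_sub_comm z.im] at h2
    rcases hpk with h | h <;> simp only [h, sub_self, abs_zero] at * <;> linarith
  rw [norm_sub_rev] at hqk
  linarith [norm_sub_le_norm_sub_add_norm_sub (f p) (f k) (f z),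
    norm_sub_le_norm_sub_add_norm_sub (f k) (f q) (f z)]

end CrossLipschitzAt

theorem exists_crossLipschitzAt_of_hasLineDerivAt [NormedSpace ℝ F] {f : ℂ → F} {z : ℂ}
    {d d' : F} (h1 : HasLineDerivAt ℝ f d z 1)
    (hI : HasLineDerivAt ℝ f d' z Complex.I) :
    ∃ N, ∃ δ > 0, CrossLipschitzAt f N δ z := by
  have hline : ∀ {v d}, HasLineDerivAt ℝ f d z v →
      ∃ N, ∃ δ > 0, ∀ t : ℝ, |t| < δ → ‖f (z + t • v) - f z‖ ≤ N * |t| := by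
    intro v d h
    obtain ⟨N, hN⟩ := h.differentiableAt.isBigO_sub.bound
    obtain ⟨δ, hδ, hball⟩ := Metric.eventually_nhds_iff.1 hN
    exact ⟨N, δ, hδ, fun t ht ↦ by simpa using hball (y := t) (by simpa using ht)⟩
  obtain ⟨N, δ, hδ, hre⟩ := hline h1
  obtain ⟨N', δ', hδ', him⟩ := hline hI
  refine ⟨max N N', min δ δ', lt_min hδ hδ', fun w hw ↦ ?_⟩
  have hwδ := lt_min_iff.1 (mem_ball_iff_norm.1 hw.2)
  rw [norm_sub_of_mem_cross hw.1] at hwδ ⊢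
  rcases hw with ⟨hw | hw, -⟩
  · have heq : w = z + (w.im - z.im) • Complex.I := Complex.ext (by simp [hw]) (by simp)
    rw [hw, sub_self, abs_zero, zero_add] at hwδ ⊢
    have := him _ hwδ.2
    rw [← heq] at this
    exact this.trans (by gcongr; exact le_max_right ..)
  · have heq : w = z + (w.re - z.re) • (1 : ℂ) := Complex.ext (by simp) (by simp [hw])
    rw [hw, sub_self, abs_zero, add_zero] at hwδ ⊢
    have := hre _ hwδ.1
    rw [← heq] at this
    exact this.trans (by gcongr; exact le_max_left ..)

theorem isClosed_setOf_crossLipschitzAt {f : ℂ → F} {U : Set ℂ}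
    (hf : ∀ z ∈ U, ContinuousWithinAt f (cross z) z) (N : ℝ) {δ : ℝ} (hδ : 0 < δ) :
    IsClosed {z | Metric.ball z δ ⊆ U ∧ CrossLipschitzAt f N δ z} := by
  set S := {z | Metric.ball z δ ⊆ U ∧ CrossLipschitzAt f N δ z}
  refine isClosed_of_closure_subset fun z hz ↦ ?_
  have : (𝓝[S] z).NeBot := mem_closure_iff_nhdsWithin_neBot.1 hz
  have hnhds : ∀ {w : ℂ}, w ∈ Metric.ball z δ → ∀ q : ℂ → ℂ, Continuous q → q z = w →
      ∀ᶠ u in 𝓝[S] z, u ∈ S ∧ q u ∈ Metric.ball u δ := by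
    intro w hw q hq hqz
    have : ∀ᶠ u in 𝓝 z, dist (q u) u < δ :=
      (hq.dist continuous_id).continuousAt.eventually_lt_const (by simpa [hqz] using hw)
    filter_upwards [self_mem_nhdsWithin, nhdsWithin_le_nhds this] with u hu hqu using ⟨hu, hqu⟩
  have hball : Metric.ball z δ ⊆ U := fun w hw ↦ by
    obtain ⟨u, hu, hwu⟩ := (hnhds hw (fun _ ↦ w) continuous_const rfl).exists
    exact hu.1 hwu
  have hcross : ∀ {w : ℂ}, w ∈ U → ∀ q : ℂ → ℂ, Continuous q → q z = w → (∀ u, q u ∈ cross w) →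
      Tendsto (fun u ↦ f (q u)) (𝓝[S] z) (𝓝 (f w)) := by
    intro w hw q hq hqz hqw
    exact (hf w hw).tendsto.comp (tendsto_nhdsWithin_iff.2
      ⟨(hqz ▸ hq.continuousAt.tendsto).mono_left nhdsWithin_le_nhds, .of_forall hqw⟩)
  have hfz : Tendsto f (𝓝[S] z) (𝓝 (f z)) := by
    obtain ⟨q, hq, hqz, hqc⟩ := exists_continuous_mem_cross_inter_cross (z := z) (.inl rfl)
    have hlim : Tendsto (fun u ↦ N * ‖q u - u‖) (𝓝[S] z) (𝓝 0) :=
      (Continuous.tendsto' (by fun_prop) z 0 (by simp [hqz])).mono_left nhdsWithin_le_nhds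
    have hdiff : Tendsto (fun u ↦ f (q u) - f u) (𝓝[S] z) (𝓝 0) := by
      refine squeeze_zero_norm' ?_ hlim
      filter_upwards [hnhds (Metric.mem_ball_self hδ) q hq hqz] with u hu
        using hu.1.2 _ ⟨(hqc u).1, hu.2⟩
    simpa using (hcross (hball (Metric.mem_ball_self hδ)) q hq hqz fun u ↦ (hqc u).2).sub hdiff
  refine ⟨hball, fun w hw ↦ ?_⟩
  obtain ⟨q, hq, hqz, hqc⟩ := exists_continuous_mem_cross_inter_cross hw.1
  have hlim : Tendsto (fun u ↦ N * ‖q u - u‖) (𝓝[S] z) (𝓝 (N * ‖w - z‖)) :=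
    (Continuous.tendsto' (by fun_prop) z _ (by simp [hqz])).mono_left nhdsWithin_le_nhds
  refine le_of_tendsto_of_tendsto
    ((hcross (hball hw.2) q hq hqz fun u ↦ (hqc u).2).sub hfz).norm hlim ?_
  filter_upwards [hnhds hw.2 q hq hqz] with u hu using hu.1.2 _ ⟨(hqc u).1, hu.2⟩

end Cross

section LipschitzEstimate

variable {f : ℂ → ℂ} {K : Set ℂ} {z : ℂ} {N C s δ : ℝ}

-- The projections of `K` to the two axes span a grid on which `f` is controlled by the bounds on
-- crosses and off which it is holomorphic.
theorem norm_sub_le_on_quarter_square (hK : IsClosed K) (hz : z ∈ K) (hs : 0 < s) (hδ : 2 * s < δ)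
    (hN : 0 ≤ N) (hC : 64 * N ≤ C)
    (hcross : ∀ k ∈ K ∩ closedSquare z s, CrossLipschitzAt f N δ k)
    (hd : ∀ p ∈ closedSquare z s \ K, DifferentiableAt ℂ f p)
    (hA : ∀ p ∈ closedSquare z s, ‖f p - f z‖ ≤ C * s) :
    ∀ w ∈ closedSquare z (s / 4), ‖f w - f z‖ ≤ C * (s / 4) := by
  intro w hw
  have hcompact : IsCompact (K ∩ closedSquare z s) :=
    ((isCompact_closedBall z.re s).reProdIm (isCompact_closedBall z.im s)).inter_left hK
  have hzK : z ∈ K ∩ closedSquare z s := ⟨hz, mem_closedSquare.2 (by simp [hs.le])⟩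
  rw [← mul_div_assoc]
  refine norm_le_of_grid (φ := fun p ↦ f p - f z) (X := Complex.re '' (K ∩ closedSquare z s))
    (Y := Complex.im '' (K ∩ closedSquare z s)) hs
    (hcompact.image Complex.continuous_re).isClosed (hcompact.image Complex.continuous_im).isClosed
    ⟨z, hzK, rfl⟩ ⟨z, hzK, rfl⟩ hA (fun p hp h ↦ ?_) (fun p hp h ↦ ?_) hw
  · obtain ⟨k, hk, hpk⟩ : ∃ k ∈ K ∩ closedSquare z s, p ∈ cross k :=
      h.elim (fun ⟨k, hk, h⟩ ↦ ⟨k, hk, .inl h.symm⟩) fun ⟨k, hk, h⟩ ↦ ⟨k, hk, .inr h.symm⟩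
    have := (hcross z hzK).norm_sub_le (hcross k hk) hN hδ hk.2 hp hpk
    nlinarith
  · refine (hd p ⟨hp, fun hpK ↦ ?_⟩).sub_const _
    exact h.elim (· ⟨p, ⟨hpK, hp⟩, rfl⟩) (· ⟨p, ⟨hpK, hp⟩, rfl⟩)

theorem norm_sub_le_mul_of_crossLipschitzAt (hK : IsClosed K) (hz : z ∈ K) (hδ : 2 * s < δ)
    (hN : 0 ≤ N) (hC : 64 * N ≤ C)
    (hcross : ∀ k ∈ K ∩ closedSquare z s, CrossLipschitzAt f N δ k)
    (hd : ∀ p ∈ closedSquare z s \ K, DifferentiableAt ℂ f p)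
    (hA : ∀ p ∈ closedSquare z s, ‖f p - f z‖ ≤ C * s) {w : ℂ} (hw : ‖w - z‖ ≤ s) :
    ‖f w - f z‖ ≤ 4 * C * ‖w - z‖ := by
  rcases eq_or_ne w z with rfl | hwz
  · simp
  have hwz' : 0 < ‖w - z‖ := norm_pos_iff.2 (sub_ne_zero.2 hwz)
  have hs : 0 < s := hwz'.trans_le hw
  have hscale : ∀ n : ℕ, ∀ p ∈ closedSquare z (s * (1 / 4) ^ n),
      ‖f p - f z‖ ≤ C * (s * (1 / 4) ^ n) := by
    intro n
    induction n with
    | zero => simpa using hA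
    | succ n ih =>
      have hle : s * (1 / 4) ^ n ≤ s :=
        mul_le_of_le_one_right hs.le (pow_le_one₀ (by norm_num) (by norm_num))
      have hsub : closedSquare z (s * (1 / 4) ^ n) ⊆ closedSquare z s :=
        closedSquare_subset_closedSquare hle
      rw [pow_succ, ← mul_assoc, mul_one_div]
      exact norm_sub_le_on_quarter_square hK hz (by positivity) (by linarith) hN hC
        (fun k hk ↦ hcross k ⟨hk.1, hsub hk.2⟩) (fun p hp ↦ hd p ⟨hsub hp.1, hp.2⟩) ih
  obtain ⟨n, hlt, hle⟩ := exists_nat_pow_near_of_lt_one (div_pos hwz' hs) ((div_le_one hs).2 hw)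
    (by norm_num : (0 : ℝ) < 1 / 4) (by norm_num)
  rw [div_le_iff₀' hs] at hle
  rw [lt_div_iff₀' hs, pow_succ] at hlt
  have hmem : w ∈ closedSquare z (s * (1 / 4) ^ n) := mem_closedSquare.2
    ⟨(Complex.abs_re_le_norm (w - z)).trans hle, (Complex.abs_im_le_norm (w - z)).trans hle⟩
  have hC0 : 0 ≤ C := by linarith
  nlinarith [hscale n w hmem, hC0]

end LipschitzEstimate

section Tolstov

theorem exists_ball_crossLipschitzAt {F : Type*} [NormedAddCommGroup F] {f : ℂ → F}
    {K U : Set ℂ} (hK : IsClosed K) (hU : IsOpen U) (hKU : (K ∩ U).Nonempty)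
    (hf : ∀ z ∈ U, ∃ N, ∃ δ > 0, CrossLipschitzAt f N δ z) :
    ∃ z₀ ∈ K ∩ U, ∃ N ≥ 0, ∃ δ > 0, ∀ z ∈ K ∩ Metric.ball z₀ δ, CrossLipschitzAt f N δ z := by
  have : LocallyCompactSpace ↥(K ∩ U) :=
    (hK.isLocallyClosed.inter hU.isLocallyClosed).locallyCompactSpace
  have : Nonempty ↥(K ∩ U) := hKU.to_subtype
  have hcont : ∀ z ∈ U, ContinuousWithinAt f (cross z) z := fun z hz ↦ by
    obtain ⟨N, δ, hδ, h⟩ := hf z hz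
    exact h.continuousWithinAt hδ
  set S : ℕ → Set ℂ := fun n ↦
    {z | Metric.ball z (1 / (n + 1 : ℝ)) ⊆ U ∧ CrossLipschitzAt f n (1 / (n + 1 : ℝ)) z}
  have hcover : ⋃ n, ((↑) : ↥(K ∩ U) → ℂ) ⁻¹' S n = Set.univ := by
    refine Set.iUnion_eq_univ_iff.2 fun z ↦ ?_
    obtain ⟨N, δ, hδ, hz⟩ := hf z z.2.2
    obtain ⟨ε, hε, hball⟩ := Metric.isOpen_iff.1 hU z z.2.2
    have hsmall : ∀ᶠ n : ℕ in atTop, 1 / (n + 1 : ℝ) < min δ ε :=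
      tendsto_one_div_add_atTop_nhds_zero_nat.eventually_lt_const (lt_min hδ hε)
    obtain ⟨n, hn, hNn⟩ := (hsmall.and (eventually_ge_atTop ⌈N⌉₊)).exists
    rw [lt_min_iff] at hn
    exact ⟨n, (Metric.ball_subset_ball hn.2.le).trans hball,
      hz.mono (Nat.ceil_le.1 hNn) hn.1.le⟩
  obtain ⟨n, z₀, hz₀⟩ := nonempty_interior_of_iUnion_of_closed (fun n : ℕ ↦
    (isClosed_setOf_crossLipschitzAt hcont n (by positivity)).preimage continuous_subtype_val)
    hcover
  obtain ⟨r, hr, hball⟩ := Metric.mem_nhds_iff.1 (mem_interior_iff_mem_nhds.1 hz₀)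
  obtain ⟨ε, hε, hεU⟩ := Metric.isOpen_iff.1 hU z₀ z₀.2.2
  refine ⟨z₀, z₀.2, n, n.cast_nonneg, min (1 / (n + 1)) (min r ε), by positivity, fun z hz ↦ ?_⟩
  have hzr : z ∈ Metric.ball (z₀ : ℂ) r := Metric.ball_subset_ball (by simp) hz.2
  have hzU : z ∈ U := hεU (Metric.ball_subset_ball (by simp) hz.2)
  have hzS : (⟨z, hz.1, hzU⟩ : ↥(K ∩ U)) ∈ Metric.ball z₀ r := hzr
  exact (hball hzS).2.mono le_rfl (min_le_left _ _)

theorem exists_ball_norm_sub_le_mul {f : ℂ → ℂ} {K : Set ℂ} {z₀ : ℂ} {M N δ : ℝ}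
    (hK : IsClosed K) (hδ : 0 < δ) (hN : 0 ≤ N)
    (hcross : ∀ z ∈ K ∩ Metric.ball z₀ δ, CrossLipschitzAt f N δ z)
    (hM : ∀ᶠ w in 𝓝 z₀, ‖f w‖ ≤ M) (hd : ∀ᶠ w in 𝓝 z₀, w ∉ K → DifferentiableAt ℂ f w) :
    ∃ C ≥ 0, ∃ r > 0, ∀ k ∈ K ∩ Metric.ball z₀ r, ∀ w ∈ Metric.ball z₀ r,
      ‖f w - f k‖ ≤ C * ‖w - k‖ := by
  obtain ⟨ε, hε, hball⟩ := Metric.eventually_nhds_iff_ball.1 (hM.and hd)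
  set s : ℝ := min δ ε / 4 with hs_def
  have hs : 0 < s := by positivity
  have hsδ : 4 * s ≤ δ := by linarith [min_le_left δ ε]
  have hsε : 4 * s ≤ ε := by linarith [min_le_right δ ε]
  set C : ℝ := max (64 * N) (2 * M / s)
  refine ⟨4 * C, by positivity, s / 2, by positivity, fun k hk w hw ↦ ?_⟩
  have hsub : closedSquare k s ⊆ Metric.ball z₀ (4 * s) := fun p hp ↦ by
    have hpk : ‖p - k‖ ≤ s + s :=
      (Complex.norm_le_abs_re_add_abs_im (p - k)).trans (add_le_add hp.1 hp.2)
    rw [mem_ball_iff_norm] at *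
    have := mem_ball_iff_norm.1 hk.2
    linarith [norm_sub_le_norm_sub_add_norm_sub p k z₀]
  have hkδ : k ∈ closedSquare k s := mem_closedSquare.2 (by simp [hs.le])
  refine norm_sub_le_mul_of_crossLipschitzAt hK hk.1 (by linarith : 2 * s < δ) hN
    (le_max_left _ _)
    (fun p hp ↦ hcross p ⟨hp.1, Metric.ball_subset_ball hsδ (hsub hp.2)⟩)
    (fun p hp ↦ (hball p (Metric.ball_subset_ball hsε (hsub hp.1))).2 hp.2)
    (fun p hp ↦ ?_) ?_
  · have hfp := (hball p (Metric.ball_subset_ball hsε (hsub hp))).1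
    have hfk := (hball k (Metric.ball_subset_ball hsε (hsub hkδ))).1
    calc ‖f p - f k‖ ≤ 2 * M := by linarith [_root_.norm_sub_le (f p) (f k)]
      _ = 2 * M / s * s := by field_simp
      _ ≤ C * s := by gcongr; exact le_max_right _ _
  · rw [← dist_eq_norm]
    linarith [dist_triangle_right w k z₀, Metric.mem_ball.1 hw, Metric.mem_ball.1 hk.2]

theorem norm_deriv_le_of_norm_sub_le_mul {f : ℂ → ℂ} {K : Set ℂ} {z₀ : ℂ} {C r : ℝ}
    (hK : IsClosed K) (hz₀ : z₀ ∈ K)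
    (hlip : ∀ k ∈ K ∩ Metric.ball z₀ (2 * r), ∀ w ∈ Metric.ball z₀ (2 * r),
      ‖f w - f k‖ ≤ C * ‖w - k‖)
    (hd : ∀ w ∈ Metric.ball z₀ (2 * r) \ K, DifferentiableAt ℂ f w) {w : ℂ}
    (hw : w ∈ Metric.ball z₀ r \ K) : ‖deriv f w‖ ≤ 3 * C := by
  obtain ⟨k, hk, hwk⟩ := hK.exists_infDist_eq_dist ⟨z₀, hz₀⟩ w
  have hd0 : 0 < dist w k := hwk ▸ (hK.notMem_iff_infDist_pos ⟨z₀, hz₀⟩).1 hw.2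
  have hdr : dist w k < r := hwk ▸ (Metric.infDist_le_dist_of_mem hz₀).trans_lt hw.1
  have hball : ∀ p ∈ Metric.closedBall w (dist w k / 2), p ∈ Metric.ball z₀ (2 * r) \ K := by
    intro p hp
    rw [Metric.mem_closedBall] at hp
    refine ⟨Metric.mem_ball.2 ?_, fun hpK ↦ ?_⟩
    · linarith [dist_triangle p w z₀, Metric.mem_ball.1 hw.1]
    · rw [dist_comm] at hp
      linarith [hwk ▸ Metric.infDist_le_dist_of_mem hpK (x := w)]
  have hkball : k ∈ Metric.ball z₀ (2 * r) := Metric.mem_ball.2 <| by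
    linarith [dist_triangle_left k z₀ w, Metric.mem_ball.1 hw.1]
  have hsphere : ∀ p ∈ Metric.sphere w (dist w k / 2), ‖f p - f k‖ ≤ C * (3 / 2 * dist w k) := by
    intro p hp
    have hC : 0 ≤ C := nonneg_of_mul_nonneg_left ((norm_nonneg _).trans
      (hlip k ⟨hk, hkball⟩ w (hball w (Metric.mem_closedBall_self (by positivity))).1))
      (by rwa [← dist_eq_norm])
    refine (hlip k ⟨hk, hkball⟩ p (hball p (Metric.sphere_subset_closedBall hp)).1).trans ?_
    rw [← dist_eq_norm]
    gcongr
    linarith [dist_triangle p w k, Metric.mem_sphere.1 hp]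
  have hdiff : DiffContOnCl ℂ (fun p ↦ f p - f k) (Metric.ball w (dist w k / 2)) := by
    refine DifferentiableOn.diffContOnCl fun p hp ↦ ?_
    exact ((hd p (hball p (Metric.closure_ball_subset_closedBall hp))).sub_const
      _).differentiableWithinAt
  have hcauchy := Complex.norm_deriv_le_of_forall_mem_sphere_norm_le (half_pos hd0) hdiff hsphere
  rw [deriv_sub_const] at hcauchy
  refine hcauchy.trans_eq ?_
  field_simp

theorem deriv_eq_of_hasLineDerivAt_one {f : ℂ → ℂ} {z d : ℂ} (hf : DifferentiableAt ℂ f z)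
    (h : HasLineDerivAt ℝ f d z 1) : deriv f z = d := by
  simpa using (hf.hasDerivAt.hasFDerivAt.restrictScalars ℝ).hasLineDerivAt 1 |>.unique h

theorem hasDerivAt_of_eventually_hasLineDerivAt {f g : ℂ → ℂ} {z : ℂ} {C : ℝ}
    (hg : ∀ᶠ w in 𝓝 z, ‖g w‖ ≤ C)
    (hL : ∀ᶠ w in 𝓝 z, ∀ v, HasLineDerivAt ℝ f (v * g w) w v) : HasDerivAt f (g z) z := by
  have hreal := hasFDerivAt_of_eventually_hasLineDerivAt
    (D := fun w ↦ (ContinuousLinearMap.toSpanSingleton ℂ (g w)).restrictScalars ℝ)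
    (hg.mono fun w hw ↦ by simpa using hw) (hL.mono fun w hw v ↦ by simpa using hw v)
  exact hasFDerivAt_of_restrictScalars ℝ hreal rfl

/-- **Tolstov's theorem**, with the partial derivatives replaced by directional derivatives. -/
theorem differentiableOn_of_hasLineDerivAt_mul {f g : ℂ → ℂ} {U : Set ℂ} (hU : IsOpen U)
    (hloc : ∀ z ∈ U, ∃ M, ∀ᶠ w in 𝓝 z, ‖f w‖ ≤ M)
    (hL : ∀ z ∈ U, ∀ v, HasLineDerivAt ℝ f (v * g z) z v) : DifferentiableOn ℂ f U := by
  set K : Set ℂ := {z | AnalyticAt ℂ f z}ᶜ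
  have hK : IsClosed K := (isOpen_analyticAt ℂ f).isClosed_compl
  have hd : ∀ w ∉ K, DifferentiableAt ℂ f w := fun w hw ↦
    AnalyticAt.differentiableAt (not_not.1 hw)
  suffices hKU : ¬(K ∩ U).Nonempty from
    fun z hz ↦ (hd z fun hzK ↦ hKU ⟨z, hzK, hz⟩).differentiableWithinAt
  intro hKU
  obtain ⟨z₀, hz₀, N, hN, δ, hδ, hcross⟩ := exists_ball_crossLipschitzAt hK hU hKU
    fun z hz ↦ exists_crossLipschitzAt_of_hasLineDerivAt (hL z hz 1) (hL z hz Complex.I)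
  obtain ⟨M, hM⟩ := hloc z₀ hz₀.2
  obtain ⟨C, hC, r, hr, hlip⟩ := exists_ball_norm_sub_le_mul hK hδ hN hcross hM
    (.of_forall hd)
  have hnear : ∀ᶠ w in 𝓝 z₀, ‖g w‖ ≤ 3 * C := by
    filter_upwards [Metric.ball_mem_nhds z₀ (half_pos hr), hU.mem_nhds hz₀.2] with w hw hwU
    have hw' : w ∈ Metric.ball z₀ r := Metric.ball_subset_ball (by linarith) hw
    by_cases hwK : w ∈ K
    · have hle := (hL w hwU 1).le_of_lip' hC (eventually_of_mem
        (Metric.isOpen_ball.mem_nhds hw') (hlip w ⟨hwK, hw'⟩))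
      rw [one_mul, norm_one, mul_one] at hle
      exact hle.trans (by linarith)
    · rw [← deriv_eq_of_hasLineDerivAt_one (d := g w) (hd w hwK) (by simpa using hL w hwU 1)]
      exact norm_deriv_le_of_norm_sub_le_mul (r := r / 2) hK hz₀.1
        (by rwa [mul_div_cancel₀ _ two_ne_zero]) (fun w hw ↦ hd w hw.2) ⟨hw, hwK⟩
  have hU₀ : ∀ᶠ w in 𝓝 z₀, ∀ v, HasLineDerivAt ℝ f (v * g w) w v :=
    eventually_of_mem (hU.mem_nhds hz₀.2) hL
  refine hz₀.1 (Complex.analyticAt_iff_eventually_differentiableAt.2 ?_)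
  filter_upwards [hnear.eventually_nhds, hU₀.eventually_nhds] with w hgw hLw
    using (hasDerivAt_of_eventually_hasLineDerivAt hgw hLw).differentiableAt

theorem differentiableOn_of_hasLineDerivAt_smul {F : Type*} [NormedAddCommGroup F]
    [NormedSpace ℂ F] [FiniteDimensional ℂ F] {f g : ℂ → F} {U : Set ℂ} (hU : IsOpen U)
    (hloc : ∀ z ∈ U, ∃ M, ∀ᶠ w in 𝓝 z, ‖f w‖ ≤ M)
    (hL : ∀ z ∈ U, ∀ v : ℂ, HasLineDerivAt ℝ f (v • g z) z v) : DifferentiableOn ℂ f U := by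
  set L := (Module.finBasis ℂ F).equivFunL
  suffices h : ∀ i, DifferentiableOn ℂ (fun z ↦ L (f z) i) U from
    L.comp_differentiableOn_iff.1 (differentiableOn_pi.2 h)
  intro i
  set ℓ : F →L[ℂ] ℂ := (ContinuousLinearMap.proj i).comp L.toContinuousLinearMap
  refine differentiableOn_of_hasLineDerivAt_mul (g := fun z ↦ ℓ (g z)) hU (fun z hz ↦ ?_)
    fun z hz v ↦ ?_
  · obtain ⟨M, hM⟩ := hloc z hz
    exact ⟨‖ℓ‖ * M, hM.mono fun w hw ↦ ℓ.le_of_opNorm_le_of_le le_rfl hw⟩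
  · rw [← smul_eq_mul, ← map_smul]
    exact (ℓ.restrictScalars ℝ).hasFDerivAt.comp_hasDerivAt (0 : ℝ) (hL z hz v)

end Tolstov

section Polyanalytic

variable {F : Type*} [NormedAddCommGroup F] [NormedSpace ℂ F] {y : ℂ →L[ℝ] ℝ}

/-- The polyanalytic function `∑ i < m, y ^ i • h i`, a polynomial in the real coordinate `y` with
(holomorphic) coefficients `h i`. -/
noncomputable def polyanalyticSum (y : ℂ →L[ℝ] ℝ) (m : ℕ) (h : ℕ → ℂ → F) (z : ℂ) : F :=
  ∑ i ∈ Finset.range m, y z ^ i • h i z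

/-- The coefficients of the primitive, with respect to `y`, of the polyanalytic function with
coefficients `q`; its constant term is `φ`. -/
noncomputable def primitiveCoeff (φ : ℂ → F) (q : ℕ → ℂ → F) : ℕ → ℂ → F
  | 0 => φ
  | i + 1 => fun z ↦ (i + 1 : ℝ)⁻¹ • q i z

theorem polyanalyticSum_primitiveCoeff (m : ℕ) (φ : ℂ → F) (q : ℕ → ℂ → F) (z : ℂ) :
    polyanalyticSum y (m + 1) (primitiveCoeff φ q) z =
      φ z + polyanalyticSum y (m + 1) (primitiveCoeff 0 q) z := by
  simp [polyanalyticSum, Finset.sum_range_succ', primitiveCoeff, add_comm]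

theorem differentiableOn_primitiveCoeff {φ : ℂ → F} {q : ℕ → ℂ → F} {U : Set ℂ}
    (hφ : DifferentiableOn ℂ φ U) (hq : ∀ i, DifferentiableOn ℂ (q i) U) (i : ℕ) :
    DifferentiableOn ℂ (primitiveCoeff φ q i) U := by
  cases i with
  | zero => exact hφ
  | succ i => exact (hq i).const_smul _

theorem norm_primitiveCoeff_le {φ : ℂ → F} {q : ℕ → ℂ → F} {z : ℂ} {C : ℝ} (hφ : ‖φ z‖ ≤ C)
    (hq : ∀ i, ‖q i z‖ ≤ C) (i : ℕ) : ‖primitiveCoeff φ q i z‖ ≤ C := by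
  cases i with
  | zero => exact hφ
  | succ i =>
    rw [primitiveCoeff, norm_smul, norm_inv, Real.norm_of_nonneg (by positivity)]
    exact (mul_le_of_le_one_left (norm_nonneg _)
      (inv_le_one_of_one_le₀ (by linarith [i.cast_nonneg (α := ℝ)]))).trans (hq i)

theorem norm_polyanalyticSum_le {m : ℕ} {h : ℕ → ℂ → F} {z : ℂ} {r C : ℝ} (hz : ‖z‖ ≤ r)
    (hC : ∀ i, ‖h i z‖ ≤ C) :
    ‖polyanalyticSum y m h z‖ ≤ ∑ i ∈ Finset.range m, (‖y‖ * r) ^ i * C := by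
  refine norm_sum_le_of_le _ fun i _ ↦ ?_
  have hr : 0 ≤ r := (norm_nonneg z).trans hz
  rw [norm_smul, norm_pow]
  gcongr
  · exact y.le_of_opNorm_le_of_le le_rfl hz
  · exact hC i

theorem hasLineDerivAt_polyanalyticSum (m : ℕ) {h : ℕ → ℂ → F} {z : ℂ}
    (hh : ∀ i, DifferentiableAt ℂ (h i) z) (v : ℂ) :
    HasLineDerivAt ℝ (polyanalyticSum y m h)
      (v • polyanalyticSum y m (fun i ↦ deriv (h i)) z +
        y v • ∑ i ∈ Finset.range m, (i * y z ^ (i - 1)) • h i z) z v := by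
  have hterm : ∀ i, HasDerivAt (fun t : ℝ ↦ y (z + t • v) ^ i • h i (z + t • v))
      (v • y z ^ i • deriv (h i) z + y v • (i * y z ^ (i - 1)) • h i z) 0 := by
    intro i
    have hy : HasDerivAt (fun t : ℝ ↦ y (z + t • v)) (y v) 0 := y.hasFDerivAt.hasLineDerivAt v
    have hhi : HasLineDerivAt ℝ (h i) (v • deriv (h i) z) z v := by
      simpa using ((hh i).hasDerivAt.hasFDerivAt.restrictScalars ℝ).hasLineDerivAt v
    unfold HasLineDerivAt at hhi
    convert (hy.fun_pow i).fun_smul hhi using 1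
    simp only [zero_smul, add_zero, smul_smul, smul_comm v, mul_comm (y v)]
  unfold HasLineDerivAt polyanalyticSum
  convert HasDerivAt.fun_sum fun i _ ↦ hterm i using 1
  rw [Finset.sum_add_distrib, Finset.smul_sum, Finset.smul_sum]

theorem sum_natCast_mul_pow_smul_primitiveCoeff (m : ℕ) (φ : ℂ → F) (q : ℕ → ℂ → F) (z : ℂ) :
    ∑ i ∈ Finset.range (m + 1), (i * y z ^ (i - 1)) • primitiveCoeff φ q i z =
      polyanalyticSum y m q z := by
  rw [Finset.sum_range_succ', polyanalyticSum]
  simp only [primitiveCoeff, Nat.cast_zero, zero_mul, zero_smul, add_zero, smul_smul]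
  refine Finset.sum_congr rfl fun i _ ↦ ?_
  congr 1
  have : (i + 1 : ℝ) ≠ 0 := by positivity
  push_cast
  field_simp

/-- The equations satisfied by the components of a monogenic function with respect to a Jordan
chain of the algebra: the directional derivative of `f j` along `v` is `v • γ j + y v • γ (j + 1)`,
where `y` is the real coordinate by which the nilpotent part enters. -/
def IsMonogenicChain (y : ℂ →L[ℝ] ℝ) (U : Set ℂ) (f γ : ℕ → ℂ → F) : Prop :=
  ∀ j, ∀ z ∈ U, ∀ v : ℂ, HasLineDerivAt ℝ (f j) (v • γ j z + y v • γ (j + 1) z) z v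

namespace IsMonogenicChain

variable {U : Set ℂ} {f γ : ℕ → ℂ → F}

theorem tail (hf : IsMonogenicChain y U f γ) :
    IsMonogenicChain y U (fun j ↦ f (j + 1)) fun j ↦ γ (j + 1) :=
  fun j ↦ hf (j + 1)

theorem mono (hf : IsMonogenicChain y U f γ) {V : Set ℂ} (hVU : V ⊆ U) :
    IsMonogenicChain y V f γ :=
  fun j z hz ↦ hf j z (hVU hz)

theorem eq_polyanalyticSum_deriv (hf : IsMonogenicChain y U f γ) (hU : IsOpen U) (hy : y 1 = 0)
    {j m : ℕ} {h : ℕ → ℂ → F} (hh : ∀ i, DifferentiableOn ℂ (h i) U)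
    (hfh : Set.EqOn (f j) (polyanalyticSum y m h) U) {z : ℂ} (hz : z ∈ U) :
    γ j z = polyanalyticSum y m (fun i ↦ deriv (h i)) z := by
  have hnhds := hU.mem_nhds hz
  have hfz : HasLineDerivAt ℝ (f j) (γ j z) z 1 := by simpa [hy] using hf j z hz 1
  refine hfz.unique ?_
  simpa [hy] using (hasLineDerivAt_polyanalyticSum (y := y) m
    (fun i ↦ (hh i).differentiableAt hnhds) 1).congr_of_eventuallyEq (eventually_of_mem hnhds hfh)

-- `f 0 - u`, with `u` the primitive of `γ 1` in the variable `y`, satisfies the hypotheses of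
-- Tolstov's theorem.
theorem differentiableOn_sub_primitive [FiniteDimensional ℂ F] (hf : IsMonogenicChain y U f γ)
    (hU : IsOpen U) (hy : y 1 = 0) {m : ℕ} {h : ℕ → ℂ → F}
    (hh : ∀ i, DifferentiableOn ℂ (h i) U) (hfh : Set.EqOn (f 1) (polyanalyticSum y m h) U)
    {M : ℝ} (hM : ∀ z ∈ U, ‖f 0 z‖ ≤ M) :
    DifferentiableOn ℂ (fun z ↦ f 0 z -
      polyanalyticSum y (m + 1) (primitiveCoeff 0 fun i ↦ deriv (h i)) z) U := by
  set p : ℕ → ℂ → F := primitiveCoeff 0 fun i ↦ deriv (h i)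
  have hp : ∀ i, DifferentiableOn ℂ (p i) U :=
    differentiableOn_primitiveCoeff (differentiableOn_const 0) fun i ↦ (hh i).deriv hU
  refine differentiableOn_of_hasLineDerivAt_smul
    (g := fun z ↦ γ 0 z - polyanalyticSum y (m + 1) (fun i ↦ deriv (p i)) z) hU
    (fun z hz ↦ ?_) fun z hz v ↦ ?_
  · have hcont : ContinuousAt (polyanalyticSum y (m + 1) p) z :=
      tendsto_finsetSum _ fun i _ ↦ (y.continuous.continuousAt.pow i).smul
        ((hp i).continuousOn.continuousAt (hU.mem_nhds hz))
    refine ⟨M + (‖polyanalyticSum y (m + 1) p z‖ + 1), ?_⟩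
    filter_upwards [hU.mem_nhds hz, hcont.norm.eventually_le_const (lt_add_one _)] with w hwU hw
    exact norm_sub_le_of_le (hM w hwU) hw
  · have hsub := HasDerivAt.fun_sub (hf 0 z hz v) (hasLineDerivAt_polyanalyticSum (y := y) (m + 1)
      (fun i ↦ (hp i).differentiableAt (hU.mem_nhds hz)) v)
    rw [sum_natCast_mul_pow_smul_primitiveCoeff, zero_add,
      hf.eq_polyanalyticSum_deriv hU hy hh hfh hz] at hsub
    unfold HasLineDerivAt
    convert hsub using 1
    module

end IsMonogenicChain

theorem norm_deriv_le_of_mem_half_ball {h : ℂ → F} {r C : ℝ} (hr : 0 < r)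
    (hd : DifferentiableOn ℂ h (Metric.ball 0 r)) (hC : ∀ z ∈ Metric.ball 0 r, ‖h z‖ ≤ C)
    {z : ℂ} (hz : z ∈ Metric.ball 0 (r / 2)) : ‖deriv h z‖ ≤ C / (r / 4) := by
  have hsub : Metric.closedBall z (r / 4) ⊆ Metric.ball 0 r :=
    Metric.closedBall_subset_ball' (by linarith [Metric.mem_ball.1 hz])
  refine Complex.norm_deriv_le_of_forall_mem_sphere_norm_le (by positivity)
    ((hd.mono ?_).diffContOnCl) fun w hw ↦ hC w (hsub (Metric.sphere_subset_closedBall hw))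
  rwa [closure_ball _ (by positivity)]

theorem exists_polyanalyticSum_eqOn [FiniteDimensional ℂ F] (hy : y 1 = 0) (m : ℕ) {R M : ℝ}
    (hR : 0 < R) (hM : 0 ≤ M) :
    ∃ r ∈ Set.Ioc 0 R, ∃ C ≥ 0, ∀ f γ : ℕ → ℂ → F,
      IsMonogenicChain y (Metric.ball 0 R) f γ → (∀ j ≥ m, ∀ z ∈ Metric.ball 0 R, f j z = 0) →
      (∀ j, ∀ z ∈ Metric.ball 0 R, ‖f j z‖ ≤ M) →
      ∃ h : ℕ → ℂ → F, (∀ i, DifferentiableOn ℂ (h i) (Metric.ball 0 r)) ∧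
        (∀ i, ∀ z ∈ Metric.ball 0 r, ‖h i z‖ ≤ C) ∧
        Set.EqOn (f 0) (polyanalyticSum y m h) (Metric.ball 0 r) := by
  induction m with
  | zero =>
    exact ⟨R, ⟨hR, le_rfl⟩, 0, le_rfl, fun f γ _ h0 _ ↦ ⟨0, fun _ ↦ differentiableOn_const 0,
      by simp, fun z hz ↦ by simpa [polyanalyticSum] using h0 0 le_rfl z hz⟩⟩
  | succ m ih =>
    obtain ⟨r, ⟨hr, hrR⟩, C, hC, ih⟩ := ih
    set D := C / (r / 4)
    set B := ∑ i ∈ Finset.range (m + 1), (‖y‖ * (r / 2)) ^ i * D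
    have hD : 0 ≤ D := by positivity
    have hB : 0 ≤ B := by positivity
    refine ⟨r / 2, ⟨half_pos hr, by linarith⟩, M + B + D, by positivity, fun f γ hf h0 hfM ↦ ?_⟩
    have hrR' : Metric.ball (0 : ℂ) r ⊆ Metric.ball 0 R := Metric.ball_subset_ball hrR
    have hr' : Metric.ball (0 : ℂ) (r / 2) ⊆ Metric.ball 0 r :=
      Metric.ball_subset_ball (by linarith)
    obtain ⟨h, hh, hhC, hfh⟩ := ih _ _ hf.tail (fun j hj ↦ h0 (j + 1) (by lia)) fun j ↦ hfM (j + 1)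
    set q : ℕ → ℂ → F := fun i ↦ deriv (h i)
    have hqD : ∀ z ∈ Metric.ball 0 (r / 2), ∀ i, ‖q i z‖ ≤ D := fun z hz i ↦
      norm_deriv_le_of_mem_half_ball hr (hh i) (hhC i) hz
    set φ : ℂ → F := fun z ↦ f 0 z - polyanalyticSum y (m + 1) (primitiveCoeff 0 q) z
    have hφ : DifferentiableOn ℂ φ (Metric.ball 0 r) :=
      (hf.mono hrR').differentiableOn_sub_primitive Metric.isOpen_ball hy hh hfh
        fun z hz ↦ hfM 0 z (hrR' hz)
    have hφB : ∀ z ∈ Metric.ball 0 (r / 2), ‖φ z‖ ≤ M + B := fun z hz ↦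
      norm_sub_le_of_le (hfM 0 z (hrR' (hr' hz))) (norm_polyanalyticSum_le
        (mem_ball_zero_iff.1 hz).le (norm_primitiveCoeff_le (by simpa using hD) (hqD z hz)))
    refine ⟨primitiveCoeff φ q, fun i ↦ ?_, fun i z hz ↦ ?_, fun z _ ↦ ?_⟩
    · exact (differentiableOn_primitiveCoeff hφ
        (fun i ↦ (hh i).deriv Metric.isOpen_ball) i).mono hr'
    · exact norm_primitiveCoeff_le ((hφB z hz).trans (by linarith))
        (fun i ↦ (hqD z hz i).trans (by linarith)) i
    · rw [polyanalyticSum_primitiveCoeff, sub_add_cancel]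

theorem exists_norm_le_of_isMonogenicChain [FiniteDimensional ℂ F] (hy : y 1 = 0) (m : ℕ)
    {R M : ℝ} (hR : 0 < R) (hM : 0 ≤ M) :
    ∃ C, ∀ f γ : ℕ → ℂ → F,
      IsMonogenicChain y (Metric.ball 0 R) f γ → (∀ j ≥ m, ∀ z ∈ Metric.ball 0 R, f j z = 0) →
      (∀ j, ∀ z ∈ Metric.ball 0 R, ‖f j z‖ ≤ M) → ‖γ 0 0‖ ≤ C := by
  obtain ⟨r, ⟨hr, hrR⟩, C, _, hexp⟩ := exists_polyanalyticSum_eqOn (F := F) hy m hR hM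
  refine ⟨∑ i ∈ Finset.range m, (‖y‖ * 0) ^ i * (C / (r / 4)), fun f γ hf h0 hfM ↦ ?_⟩
  obtain ⟨h, hh, hhC, hfh⟩ := hexp f γ hf h0 hfM
  rw [(hf.mono (Metric.ball_subset_ball hrR)).eq_polyanalyticSum_deriv Metric.isOpen_ball hy hh hfh
    (Metric.mem_ball_self hr)]
  exact norm_polyanalyticSum_le norm_zero.le fun i ↦
    norm_deriv_le_of_mem_half_ball hr (hh i) (hhC i) (Metric.mem_ball_self (half_pos hr))

end Polyanalytic

section Characters

variable {A : Type*} [NormedCommRing A] [NormedAlgebra ℂ A]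

theorem isUnit_of_forall_algHom_ne_zero [CompleteSpace A] {a : A}
    (ha : ∀ φ : A →ₐ[ℂ] ℂ, φ a ≠ 0) : IsUnit a := by
  by_contra hau
  obtain ⟨φ, hφ⟩ := WeakDual.CharacterSpace.exists_apply_eq_zero hau
  exact ha (WeakDual.CharacterSpace.toAlgHom φ) hφ

namespace CondC

variable [FiniteDimensional ℂ A] {E : Submodule ℝ A}

theorem exists_forall_im_mul_ne_zero (hC : CondC E) {a : A} (ha : IsUnit a) :
    ∃ e : E, ∀ φ : A →ₐ[ℂ] ℂ, (φ (a * e)).im ≠ 0 := by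
  refine Module.Dual.exists_forall_ne_zero_of_forall_exists
    (fun φ : A →ₐ[ℂ] ℂ ↦ Complex.imLm ∘ₗ φ.toLinearMap.restrictScalars ℝ ∘ₗ
      LinearMap.mulLeft ℝ a ∘ₗ E.subtype) fun φ ↦ ?_
  have hφa : φ a ≠ 0 := (ha.map φ).ne_zero
  obtain ⟨e, he⟩ := hC φ ((φ a)⁻¹ * Complex.I)
  replace he : φ e = (φ a)⁻¹ * Complex.I := he
  exact ⟨e, by simp [he, mul_inv_cancel_left₀ hφa]⟩

theorem exists_isUnit (hC : CondC E) : ∃ u : E, IsUnit (u : A) := by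
  have : CompleteSpace A := FiniteDimensional.complete ℂ A
  obtain ⟨u, hu⟩ := hC.exists_forall_im_mul_ne_zero isUnit_one
  refine ⟨u, isUnit_of_forall_algHom_ne_zero fun φ hφ ↦ hu φ ?_⟩
  rw [one_mul, hφ, Complex.zero_im]

end CondC

end Characters

theorem exists_norm_le_of_forall_pow_sub_mul_eq_zero {A X : Type*} [NormedCommRing A]
    [NormedAlgebra ℂ A] [FiniteDimensional ℂ A] (a : A) {g : X → A} {S : Set X}
    (h : ∀ (μ : ℂ) (m : ℕ) (b : A), (a - algebraMap ℂ A μ) ^ m * b = 0 →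
      ∃ C, ∀ x ∈ S, ‖b * g x‖ ≤ C) :
    ∃ C, ∀ x ∈ S, ‖g x‖ ≤ C := by
  have htop : (1 : A) ∈ ⨆ μ, Module.End.maxGenEigenspace (LinearMap.mulLeft ℂ a) μ := by
    rw [Module.End.iSup_maxGenEigenspace_eq_top]
    trivial
  suffices hone : ∃ C, ∀ x ∈ S, ‖1 * g x‖ ≤ C by simpa only [one_mul] using hone
  refine Submodule.iSup_induction _ (motive := fun b ↦ ∃ C, ∀ x ∈ S, ‖b * g x‖ ≤ C) htop
    (fun μ b hb ↦ ?_) ⟨0, by simp⟩ ?_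
  · obtain ⟨m, hm⟩ := (Module.End.mem_maxGenEigenspace _ _ _).1 hb
    have hmul : LinearMap.mulLeft ℂ a - μ • 1 = LinearMap.mulLeft ℂ (a - algebraMap ℂ A μ) := by
      ext c
      simp [sub_mul, ← Algebra.smul_def]
    rw [hmul, LinearMap.pow_mulLeft, LinearMap.mulLeft_apply] at hm
    exact h μ m b hm
  · rintro b c ⟨B, hB⟩ ⟨C, hC⟩
    exact ⟨B + C, fun x hx ↦ by simpa only [add_mul] using norm_add_le_of_le (hB x hx) (hC x hx)⟩

section Gateaux

variable {A : Type*} [NormedCommRing A] [NormedAlgebra ℂ A] {E : Submodule ℝ A}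

theorem GateauxDiffAt.hasLineDerivAt {Φ : E → A} {ζ : E} {g : A} (hΦ : GateauxDiffAt Φ ζ g)
    (h : E) : HasLineDerivAt ℝ Φ (h * g) ζ h := by
  rw [hasLineDerivAt_iff_tendsto_slope_zero, ← Set.Iio_union_Ioi, nhdsWithin_union, tendsto_sup]
  refine ⟨?_, hΦ h⟩
  have hneg : Tendsto (fun t : ℝ ↦ -t) (𝓝[<] 0) (𝓝[>] 0) := by
    simpa using tendsto_neg_nhdsLT (a := (0 : ℝ))
  simpa [Function.comp_def] using (hΦ (-h)).neg.comp hneg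

-- `P v` is the point `x • u + y v • w`, where `v = x + μ * y v` with `x` real.
theorem exists_clm_apply_eq_smul_add_smul {a : A} {u w : E} (haw : a * u = w) {μ : ℂ}
    (hμ : μ.im ≠ 0) :
    ∃ (y : ℂ →L[ℝ] ℝ) (P : ℂ →L[ℝ] E), y 1 = 0 ∧
      ∀ v, (P v : A) = v • (u : A) + y v • ((a - algebraMap ℂ A μ) * u) := by
  set y : ℂ →L[ℝ] ℝ := μ.im⁻¹ • Complex.imCLM
  refine ⟨y, (Complex.reCLM - μ.re • y).smulRight u + y.smulRight w, by simp [y], fun v ↦ ?_⟩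
  have hv : ((v.re - μ.re * y v : ℝ) : ℂ) = v - y v * μ := by
    apply Complex.ext
    · simp [y, mul_comm]
    · simp [y, mul_right_comm _ v.im, inv_mul_cancel₀ hμ]
  have hPv : (((Complex.reCLM - μ.re • y).smulRight u + y.smulRight w) v : A) =
      (v.re - μ.re * y v) • (u : A) + y v • (w : A) := by
    simp
  rw [hPv, ← haw]
  simp only [← Complex.coe_smul, hv]
  simp only [Algebra.smul_def, map_sub, map_mul]
  ring

variable {Φ Φ' : E → A} {ζ : E} {y : ℂ →L[ℝ] ℝ} {P : ℂ →L[ℝ] E} {u n b : A}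

theorem isMonogenicChain_pow_mul {U : Set ℂ} (hP : ∀ v, (P v : A) = v • u + y v • (n * u))
    (hL : ∀ z ∈ U, ∀ h : E, HasLineDerivAt ℝ Φ (h * Φ' (ζ + P z)) (ζ + P z) h) (b : A) :
    IsMonogenicChain y U (fun j z ↦ n ^ j * b * Φ (ζ + P z))
      fun j z ↦ n ^ j * b * (u * Φ' (ζ + P z)) := by
  intro j z hz v
  have hline : HasDerivAt (fun t : ℝ ↦ Φ (ζ + P (z + t • v))) (P v * Φ' (ζ + P z)) 0 := by
    simp only [map_add, map_smul, ← add_assoc]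
    exact hL z hz (P v)
  refine (hline.const_mul (n ^ j * b)).congr_deriv ?_
  rw [hP, ← Complex.coe_smul, ← Complex.coe_smul]
  simp only [Algebra.smul_def]
  ring

theorem exists_norm_mul_le_of_pow_mul_eq_zero [FiniteDimensional ℂ A] {m : ℕ}
    (hb : n ^ m * b = 0) (hy : y 1 = 0) (hP : ∀ v, (P v : A) = v • u + y v • (n * u)) {r M : ℝ}
    (hr : 0 < r) (hM : ∀ z ∈ Metric.ball ζ r, ‖Φ z‖ ≤ M)
    (hL : ∀ z ∈ Metric.ball ζ r, ∀ h : E, HasLineDerivAt ℝ Φ (h * Φ' z) z h) :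
    ∃ C, ∀ z ∈ Metric.ball ζ (r / 2), ‖b * (u * Φ' z)‖ ≤ C := by
  have hzero : ∀ j ≥ m, n ^ j * b = 0 := fun j hj ↦ by
    rw [← Nat.sub_add_cancel hj, pow_add, mul_assoc, hb, mul_zero]
  set B := ∑ j ∈ Finset.range m, ‖n ^ j * b‖
  have hB : ∀ j, ‖n ^ j * b‖ ≤ B := fun j ↦ by
    rcases lt_or_ge j m with hj | hj
    · exact Finset.single_le_sum (f := fun j ↦ ‖n ^ j * b‖) (fun _ _ ↦ norm_nonneg _)
        (Finset.mem_range.2 hj)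
    · rw [hzero j hj, norm_zero]
      positivity
  have hM0 : 0 ≤ M := (norm_nonneg _).trans (hM ζ (Metric.mem_ball_self hr))
  set R := r / 2 / (‖P‖ + 1)
  have hR : 0 < R := by positivity
  have hmem : ∀ z ∈ Metric.ball ζ (r / 2), ∀ w ∈ Metric.ball (0 : ℂ) R,
      z + P w ∈ Metric.ball ζ r := fun z hz w hw ↦ by
    have hPw : ‖P w‖ ≤ r / 2 := by
      have hw' : ‖w‖ * (‖P‖ + 1) < r / 2 :=
        (lt_div_iff₀ (by positivity)).1 (mem_ball_zero_iff.1 hw)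
      linarith [P.le_opNorm w, norm_nonneg w]
    rw [mem_ball_iff_norm] at hz ⊢
    rw [add_sub_right_comm]
    exact (norm_add_le _ _).trans_lt (by linarith)
  obtain ⟨C, hC⟩ := exists_norm_le_of_isMonogenicChain (F := A) hy m hR
    (mul_nonneg ((norm_nonneg _).trans (hB 0)) hM0)
  refine ⟨C, fun z hz ↦ ?_⟩
  have hchain := isMonogenicChain_pow_mul (ζ := z) hP (fun w hw ↦ hL _ (hmem z hz w hw)) b
  simpa using hC _ _ hchain (fun j hj w _ ↦ by simp only [hzero j hj, zero_mul])
    fun j w hw ↦ norm_mul_le_of_le (hB j) (hM _ (hmem z hz w hw))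

theorem CondC.exists_norm_le_of_hasLineDerivAt [FiniteDimensional ℂ A] (hE : CondC E) {r M : ℝ}
    (hr : 0 < r) (hM : ∀ z ∈ Metric.ball ζ r, ‖Φ z‖ ≤ M)
    (hL : ∀ z ∈ Metric.ball ζ r, ∀ h : E, HasLineDerivAt ℝ Φ (h * Φ' z) z h) :
    ∃ C, ∀ z ∈ Metric.ball ζ (r / 2), ‖Φ' z‖ ≤ C := by
  have : CompleteSpace A := FiniteDimensional.complete ℂ A
  obtain ⟨u, hu⟩ := hE.exists_isUnit
  obtain ⟨u', hu'⟩ := hu.exists_left_inv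
  obtain ⟨e, he⟩ := hE.exists_forall_im_mul_ne_zero (IsUnit.of_mul_eq_one u hu')
  have haw : u' * e * u = e := by rw [mul_right_comm, hu', one_mul]
  obtain ⟨C, hC⟩ : ∃ C, ∀ z ∈ Metric.ball ζ (r / 2), ‖(u : A) * Φ' z‖ ≤ C := by
    refine exists_norm_le_of_forall_pow_sub_mul_eq_zero (u' * e) fun μ m b hb ↦ ?_
    by_cases hμ : μ.im = 0
    · have hunit : IsUnit (u' * (e : A) - algebraMap ℂ A μ) :=
        isUnit_of_forall_algHom_ne_zero fun φ hφ ↦ he φ <| by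
          rw [map_sub, AlgHom.commutes, sub_eq_zero] at hφ
          exact hφ ▸ hμ
      exact ⟨0, fun z _ ↦ by simp [(hunit.pow m).mul_right_eq_zero.1 hb]⟩
    · obtain ⟨y, P, hy, hP⟩ := exists_clm_apply_eq_smul_add_smul haw hμ
      exact exists_norm_mul_le_of_pow_mul_eq_zero hb hy hP hr hM hL
  refine ⟨‖u'‖ * C, fun z hz ↦ ?_⟩
  calc ‖Φ' z‖ = ‖u' * (u * Φ' z)‖ := by rw [← mul_assoc, hu', one_mul]
    _ ≤ ‖u'‖ * C := norm_mul_le_of_le le_rfl (hC z hz)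

/-- The real-linear map `h ↦ h * g` on `E`: `g` is a Lorch derivative when this is a Fréchet
derivative. -/
noncomputable def mulRightCLM (E : Submodule ℝ A) (g : A) : E →L[ℝ] A :=
  ((ContinuousLinearMap.mul ℝ A).flip g).comp E.subtypeL

theorem norm_mulRightCLM_le (g : A) : ‖mulRightCLM E g‖ ≤ ‖g‖ :=
  ContinuousLinearMap.opNorm_le_bound _ (norm_nonneg g) fun _ ↦
    (norm_mul_le _ _).trans_eq (mul_comm _ _)

theorem LorchDiffAt.of_hasFDerivAt {g : A} (hΦ : HasFDerivAt Φ (mulRightCLM E g) ζ) (Ω : Set E) :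
    LorchDiffAt Ω Φ ζ g := by
  intro ε hε
  obtain ⟨δ, hδ, hle⟩ := Metric.eventually_nhds_iff.1
    ((hasFDerivAt_iff_isLittleO_nhds_zero.1 hΦ).def hε)
  exact ⟨δ, hδ, fun h hh _ ↦ hle (by rwa [dist_zero_right])⟩

end Gateaux

theorem gateaux_implies_lorch_general {A : Type*} [NormedCommRing A] [NormedAlgebra ℂ A]
    [FiniteDimensional ℂ A] {E : Submodule ℝ A} (hC : CondC E) {Ω : Set E} (hΩ : IsOpen Ω)
    {Φ Φ' : E → A} (hlb : IsLocBoundedOn Ω Φ) (hG : ∀ ζ ∈ Ω, GateauxDiffAt Φ ζ (Φ' ζ)) :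
    ∀ ζ ∈ Ω, LorchDiffAt Ω Φ ζ (Φ' ζ) := by
  intro ζ hζ
  have : FiniteDimensional ℝ A := FiniteDimensional.complexToReal A
  have hline : ∀ z ∈ Ω, ∀ h : E, HasLineDerivAt ℝ Φ (h * Φ' z) z h := fun z hz ↦
    (hG z hz).hasLineDerivAt
  obtain ⟨s, hs, M, hM⟩ := hlb ζ hζ
  obtain ⟨r, hr, hball⟩ := Metric.mem_nhds_iff.1
    (inter_mem (hΩ.mem_nhds hζ) (Metric.ball_mem_nhds ζ hs))
  obtain ⟨C, hbound⟩ := hC.exists_norm_le_of_hasLineDerivAt hr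
    (fun z hz ↦ hM z (hball hz).1 (mem_ball_iff_norm.1 (hball hz).2))
    fun z hz ↦ hline z (hball hz).1
  have hnear : ∀ᶠ z in 𝓝 ζ, ‖mulRightCLM E (Φ' z)‖ ≤ C :=
    eventually_of_mem (Metric.ball_mem_nhds ζ (half_pos hr)) fun z hz ↦
      (norm_mulRightCLM_le _).trans (hbound z hz)
  exact .of_hasFDerivAt (hasFDerivAt_of_eventually_hasLineDerivAt hnear
    (eventually_of_mem (hΩ.mem_nhds hζ) hline)) Ω

/-- An analog of the Hille theorem: under condition (C), a locally bounded,
Gâteaux differentiable function on an open subset of `E_k` is Lorch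
differentiable, with the same derivative. -/
theorem gateaux_implies_lorch
    {A : Type*} [NormedCommRing A] [NormedAlgebra ℂ A] [FiniteDimensional ℂ A]
    {k : ℕ} (hk : 2 ≤ k) (e : Fin k → A) (he0 : e ⟨0, by omega⟩ = 1)
    (hli : LinearIndependent ℝ e)
    (hC : CondC (Submodule.span ℝ (Set.range e)))
    (Ω : Set (Submodule.span ℝ (Set.range e))) (hΩ : IsOpen Ω)
    (Φ Φ' : Submodule.span ℝ (Set.range e) → A)
    (hlb : IsLocBoundedOn Ω Φ)
    (hG : ∀ ζ ∈ Ω, GateauxDiffAt Φ ζ (Φ' ζ)) :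
    ∀ ζ ∈ Ω, LorchDiffAt Ω Φ ζ (Φ' ζ) :=
  gateaux_implies_lorch_general hC hΩ hlb hG
end

section
/- Suppose condition (C) holds and let Ω ⊆ E_k be an open set. For a function Φ : Ω → A the following three properties are equivalent: (I) Φ is locally bounded in Ω and differentiable in the sense of Gâteaux at every point of Ω; (II) Φ is monogenic in Ω (continuous in Ω and differentiable in the sense of Gâteaux at every point of Ω); (III) Φ is differentiable in the sense of Lorch at every point of Ω. -/
open Filter Topology

/-!
Along a composition series of ideals `J' ⋖ J` of `A`, each factor `J / J'` is one-dimensional and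
`A` acts on it through a character `φ`. If `Φ` takes values in `J`, its component `l ∘ Φ` in that
factor has line derivatives `h ↦ φ h * c`. Condition (C) makes it locally a function `H ∘ φ` with
`H` locally bounded and satisfying the Cauchy–Riemann equations pointwise, and `H` is holomorphic
by Tolstov's theorem. Evaluating the power series of `H` in `A` gives a Lorch differentiable `G`
with `φ (G ζ) = l (Φ ζ)`, so subtracting `G * x`, with `x ∈ J` and `l x = 1`, moves the values of
`Φ` from `J` into `J'`; induction on `J` starting from `J = A` concludes.

For Tolstov's theorem let `P` be the set of points near which `f` is not holomorphic. By Baire,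
some portion of `P` consists of points at which `f` is uniformly Lipschitz along the axes. Since
`f` is holomorphic off `P`, its integrals over rectangles reduce to an integral over `P` of the
Cauchy–Riemann expression, hence vanish, and Morera's theorem contradicts the choice of `P`.
-/

open MeasureTheory Set
open scoped NNReal

section OneVariable

lemma hasDerivAt_add_smul_of_hasLineDerivAt {𝕜 V F : Type*} [NontriviallyNormedField 𝕜]
    [AddCommGroup V] [Module 𝕜 V] [NormedAddCommGroup F] [NormedSpace 𝕜 F] {f : V → F} {f' : F}
    {x v : V} {t : 𝕜} (hf : HasLineDerivAt 𝕜 f f' (x + t • v) v) :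
    HasDerivAt (fun s => f (x + s • v)) f' t := by
  have h := HasDerivAt.comp_sub_const t t (f := fun s => f (x + t • v + s • v))
    (by rw [sub_self]; exact hf)
  simpa only [add_assoc, ← add_smul, add_sub_cancel] using h

variable {E : Type*} [NormedAddCommGroup E] [NormedSpace ℝ E]

lemma ae_hasDerivAt_unique_of_eqOn {u v : ℝ → E} {T : Set ℝ} (huv : EqOn u v T) :
    ∀ᵐ x, x ∈ T → ∀ u' v', HasDerivAt u u' x → HasDerivAt v v' x → u' = v' := by
  filter_upwards [(countable_setOfPred_isolated_right_within (s := T)).ae_notMem volume]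
    with x hx hxT u' v' hu hv
  have hne : (𝓝[T ∩ Ioi x] x).NeBot := ⟨fun h => hx ⟨hxT, h⟩⟩
  have hacc : AccPt x (𝓟 T) := by
    rw [accPt_principal_iff_nhdsWithin]
    exact hne.mono (nhdsWithin_mono _ fun y hy => ⟨hy.1, ne_of_gt hy.2⟩)
  exact (uniqueDiffWithinAt_iff_accPt.2 hacc).eq_deriv _ hu.hasDerivWithinAt
    (hv.hasDerivWithinAt.congr huv (huv hxT))

lemma lipschitzOnWith_union_pair {X : Type*} [PseudoMetricSpace X] {u : ℝ → X} {S : Set ℝ}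
    {K : ℝ≥0} {c d : ℝ} (hu : ∀ s ∈ S, ∀ t, dist (u t) (u s) ≤ K * dist t s)
    (hne : (S ∩ Icc c d).Nonempty) : LipschitzOnWith K u (S ∪ {c, d}) := by
  obtain ⟨s, hs, hcs, hsd⟩ := hne
  have hcd : dist (u d) (u c) ≤ K * dist d c := calc
    dist (u d) (u c) ≤ K * dist d s + K * dist c s :=
      (dist_triangle_right _ _ (u s)).trans (add_le_add (hu s hs d) (hu s hs c))
    _ = K * dist d c := by
      rw [Real.dist_eq, Real.dist_eq, Real.dist_eq, abs_of_nonneg (sub_nonneg.2 hsd),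
        abs_of_nonpos (sub_nonpos.2 hcs), abs_of_nonneg (sub_nonneg.2 (hcs.trans hsd))]
      ring
  refine LipschitzOnWith.of_dist_le_mul ?_
  rintro x (hx | rfl | rfl) y (hy | rfl | rfl)
  · exact hu y hy x
  · simpa only [dist_comm] using hu x hx y
  · simpa only [dist_comm] using hu x hx y
  · exact hu y hy x
  · simp only [dist_self, mul_zero, le_refl]
  · simpa only [dist_comm] using hcd
  · exact hu y hy x
  · exact hcd
  · simp only [dist_self, mul_zero, le_refl]

lemma abs_sub_sub_integral_indicator_le {u D : ℝ → ℝ} {S : Set ℝ} {K : ℝ≥0} {c d : ℝ}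
    (hS : MeasurableSet S) (hu : ∀ s ∈ S, ∀ t, dist (u t) (u s) ≤ K * dist t s)
    (hD : ∀ s ∈ S, HasDerivAt u (D s) s) (hne : (S ∩ Icc c d).Nonempty) :
    |u d - u c - ∫ y in c..d, S.indicator D y| ≤ K * volume.real (Ioc c d \ S) := by
  obtain ⟨v, hv, huv⟩ := (lipschitzOnWith_union_pair hu hne).extend_real
  have hcd : c ≤ d := hne.elim fun _ hs => hs.2.1.trans hs.2.2
  have hac : AbsolutelyContinuousOnInterval v c d :=
    (hv.lipschitzOnWith (s := uIcc c d)).absolutelyContinuousOnInterval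
  have hftc : ∫ y in c..d, deriv v y = u d - u c := by
    rw [hac.integral_deriv_eq_sub, huv (Or.inr (by simp)), huv (Or.inr (by simp))]
  have hDv : ∀ᵐ y, y ∈ uIoc c d → S.indicator D y = S.indicator (deriv v) y := by
    filter_upwards [hv.ae_differentiableAt_real,
      ae_hasDerivAt_unique_of_eqOn (huv.mono subset_union_left)] with y hvy huniq _
    by_cases hy : y ∈ S
    · simpa only [indicator_of_mem hy] using huniq hy _ _ (hD y hy) hvy.hasDerivAt
    · simp only [indicator_of_notMem hy]
  have hint : IntegrableOn (deriv v) (Ioc c d) :=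
    (intervalIntegrable_iff_integrableOn_Ioc_of_le hcd).1 hac.intervalIntegrable_deriv
  have hrest : u d - u c - ∫ y in c..d, S.indicator D y = ∫ y in Ioc c d \ S, deriv v y := by
    rw [← hftc, intervalIntegral.integral_congr_ae hDv, intervalIntegral.integral_of_le hcd,
      intervalIntegral.integral_of_le hcd, setIntegral_indicator hS, sub_eq_iff_eq_add',
      integral_inter_add_sdiff hS hint]
  rw [hrest, ← Real.norm_eq_abs]
  exact norm_setIntegral_le_of_norm_le_const
    ((measure_mono sdiff_subset).trans_lt measure_Ioc_lt_top)
    fun y _ => norm_deriv_le_of_lipschitz hv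

lemma norm_sub_sub_integral_indicator_le [CompleteSpace E] {u D : ℝ → E} {S : Set ℝ} {K : ℝ≥0}
    {c d : ℝ} (hS : MeasurableSet S) (hu : ∀ s ∈ S, ∀ t, dist (u t) (u s) ≤ K * dist t s)
    (hD : ∀ s ∈ S, HasDerivAt u (D s) s) (hint : IntervalIntegrable (S.indicator D) volume c d)
    (hne : (S ∩ Icc c d).Nonempty) :
    ‖u d - u c - ∫ y in c..d, S.indicator D y‖ ≤ K * volume.real (Ioc c d \ S) := by
  obtain ⟨ℓ, hℓ, hℓx⟩ := exists_dual_vector'' ℝ (u d - u c - ∫ y in c..d, S.indicator D y)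
  have hcomp : S.indicator (fun y => ℓ (D y)) = fun y => ℓ (S.indicator D y) :=
    indicator_comp_of_zero (map_zero ℓ)
  have hLip : ∀ s ∈ S, ∀ t, dist (ℓ (u t)) (ℓ (u s)) ≤ K * dist t s := fun s hs t => by
    refine le_trans ?_ (hu s hs t)
    simpa only [dist_eq_norm, ← map_sub, one_mul] using ℓ.le_of_opNorm_le hℓ (u t - u s)
  have hreal := abs_sub_sub_integral_indicator_le hS hLip
    (fun s hs => ℓ.hasFDerivAt.comp_hasDerivAt s (hD s hs)) hne
  rw [hcomp] at hreal
  simp only [ℓ.intervalIntegral_comp_comm hint, ← map_sub] at hreal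
  rw [hℓx] at hreal
  exact (le_abs_self _).trans hreal

end OneVariable

section SeparateContinuity

variable {E : Type*} [NormedAddCommGroup E]

/-- Bounded functions of two real variables that are continuous in each variable separately. -/
structure IsSepContBdd (w : ℝ → ℝ → E) : Prop where
  continuous_left : ∀ y, Continuous fun x => w x y
  continuous_right : ∀ x, Continuous (w x)
  bounded : ∃ C, ∀ x y, ‖w x y‖ ≤ C

namespace IsSepContBdd

variable {w : ℝ → ℝ → E}

lemma swap (hw : IsSepContBdd w) : IsSepContBdd (Function.swap w) :=
  ⟨hw.continuous_right, hw.continuous_left, hw.bounded.imp fun _ hC x y => hC y x⟩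

lemma stronglyMeasurable (hw : IsSepContBdd w) : StronglyMeasurable (Function.uncurry w) :=
  stronglyMeasurable_uncurry_of_continuous_of_stronglyMeasurable hw.continuous_left
    fun x => (hw.continuous_right x).stronglyMeasurable

lemma intervalIntegrable (hw : IsSepContBdd w) (y a b : ℝ) :
    IntervalIntegrable (fun x => w x y) volume a b :=
  (hw.continuous_left y).intervalIntegrable a b

lemma continuous_integral [NormedSpace ℝ E] (hw : IsSepContBdd w) (a b : ℝ) :
    Continuous fun y => ∫ x in a..b, w x y := by
  obtain ⟨C, hC⟩ := hw.bounded
  exact intervalIntegral.continuous_of_dominated_interval (bound := fun _ => C)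
    (fun y => (hw.continuous_left y).aestronglyMeasurable)
    (fun y => .of_forall fun x _ => hC x y) intervalIntegrable_const
    (.of_forall fun x _ => hw.continuous_right x)

end IsSepContBdd

variable [NormedSpace ℝ E]

lemma intervalIntegral_swap_of_bounded {F : ℝ × ℝ → E} {C : ℝ} (hF : StronglyMeasurable F)
    (hC : ∀ p, ‖F p‖ ≤ C) (a b c d : ℝ) :
    ∫ x in a..b, ∫ y in c..d, F (x, y) = ∫ y in c..d, ∫ x in a..b, F (x, y) := by
  refine intervalIntegral_intervalIntegral_swap (F := fun x y => F (x, y))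
    (Measure.integrableOn_of_bounded ?_ hF.aestronglyMeasurable (.of_forall hC))
  rw [Measure.volume_eq_prod, Measure.prod_prod]
  exact ENNReal.mul_ne_top (by simp [uIoc]) (by simp [uIoc])

/-- Difference of the integrals of `w` along the top and the bottom edge of the rectangle
`[a, b] × [c, d]`. For `Function.swap w` it is the difference of the integrals of `w` along two
vertical edges. -/
noncomputable def edgeDiff (w : ℝ → ℝ → E) (a b c d : ℝ) : E :=
  ∫ x in a..b, (w x d - w x c)

lemma edgeDiff_swap_left (w : ℝ → ℝ → E) (a b c d : ℝ) :
    edgeDiff w b a c d = -edgeDiff w a b c d :=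
  intervalIntegral.integral_symm a b

lemma edgeDiff_swap_right (w : ℝ → ℝ → E) (a b c d : ℝ) :
    edgeDiff w a b d c = -edgeDiff w a b c d := by
  simp only [edgeDiff, ← intervalIntegral.integral_neg, neg_sub]

namespace IsSepContBdd

variable {w : ℝ → ℝ → E}

lemma edgeDiff_eq_sub (hw : IsSepContBdd w) (a b c d : ℝ) :
    edgeDiff w a b c d = (∫ x in a..b, w x d) - ∫ x in a..b, w x c :=
  intervalIntegral.integral_sub (hw.intervalIntegrable d a b) (hw.intervalIntegrable c a b)

lemma edgeDiff_add_left (hw : IsSepContBdd w) (a b e c d : ℝ) :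
    edgeDiff w a b c d + edgeDiff w b e c d = edgeDiff w a e c d :=
  intervalIntegral.integral_add_adjacent_intervals
    ((hw.intervalIntegrable d a b).sub (hw.intervalIntegrable c a b))
    ((hw.intervalIntegrable d b e).sub (hw.intervalIntegrable c b e))

lemma edgeDiff_add_right (hw : IsSepContBdd w) (a b c d e : ℝ) :
    edgeDiff w a b c d + edgeDiff w a b d e = edgeDiff w a b c e := by
  simp only [hw.edgeDiff_eq_sub]
  abel

lemma continuous_edgeDiff_left (hw : IsSepContBdd w) (a c d : ℝ) :
    Continuous fun b => edgeDiff w a b c d :=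
  intervalIntegral.continuous_primitive
    (fun _ _ => (hw.intervalIntegrable d _ _).sub (hw.intervalIntegrable c _ _)) a

lemma continuous_edgeDiff_right (hw : IsSepContBdd w) (a b c : ℝ) :
    Continuous fun d => edgeDiff w a b c d := by
  simp only [hw.edgeDiff_eq_sub]
  exact (hw.continuous_integral a b).sub continuous_const

end IsSepContBdd

end SeparateContinuity

section RectangleIntegral

variable {E : Type*} [NormedAddCommGroup E] [NormedSpace ℂ E] {w : ℝ → ℝ → E}

/-- The integral of `w` against `dz`, `z = x + iy`, along the counterclockwise boundary of the
rectangle `[a, b] × [c, d]`. -/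
noncomputable def rectIntegral (w : ℝ → ℝ → E) (a b c d : ℝ) : E :=
  Complex.I • edgeDiff (Function.swap w) c d a b - edgeDiff w a b c d

lemma rectIntegral_swap_left (w : ℝ → ℝ → E) (a b c d : ℝ) :
    rectIntegral w b a c d = -rectIntegral w a b c d := by
  rw [rectIntegral, rectIntegral, edgeDiff_swap_left w, edgeDiff_swap_right (Function.swap w),
    smul_neg, neg_sub_neg, neg_sub]

lemma rectIntegral_swap_right (w : ℝ → ℝ → E) (a b c d : ℝ) :
    rectIntegral w a b d c = -rectIntegral w a b c d := by
  rw [rectIntegral, rectIntegral, edgeDiff_swap_right w, edgeDiff_swap_left (Function.swap w),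
    smul_neg, neg_sub_neg, neg_sub]

lemma rectIntegral_eq_zero_of_forall_le {w : ℝ → ℝ → E} {X Y : Set ℝ}
    (h : ∀ a ∈ X, ∀ b ∈ X, ∀ c ∈ Y, ∀ d ∈ Y, a ≤ b → c ≤ d → rectIntegral w a b c d = 0)
    {a b c d : ℝ} (ha : a ∈ X) (hb : b ∈ X) (hc : c ∈ Y) (hd : d ∈ Y) :
    rectIntegral w a b c d = 0 := by
  wlog hab : a ≤ b generalizing a b
  · rw [rectIntegral_swap_left, this hb ha (le_of_not_ge hab), neg_zero]
  wlog hcd : c ≤ d generalizing c d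
  · rw [rectIntegral_swap_right, this hd hc (le_of_not_ge hcd), neg_zero]
  exact h a ha b hb c hc d hd hab hcd

namespace IsSepContBdd

lemma rectIntegral_add_left (hw : IsSepContBdd w) (a b e c d : ℝ) :
    rectIntegral w a b c d + rectIntegral w b e c d = rectIntegral w a e c d := by
  simp only [rectIntegral, ← hw.edgeDiff_add_left a b e, ← hw.swap.edgeDiff_add_right c d a b e,
    smul_add]
  abel

lemma rectIntegral_add_right (hw : IsSepContBdd w) (a b c d e : ℝ) :
    rectIntegral w a b c d + rectIntegral w a b d e = rectIntegral w a b c e := by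
  simp only [rectIntegral, ← hw.edgeDiff_add_right a b c d e, ← hw.swap.edgeDiff_add_left c d e,
    smul_add]
  abel

lemma continuous_rectIntegral_left (hw : IsSepContBdd w) (a c d : ℝ) :
    Continuous fun b => rectIntegral w a b c d :=
  ((hw.swap.continuous_edgeDiff_right c d a).const_smul _).sub (hw.continuous_edgeDiff_left a c d)

lemma continuous_rectIntegral_right (hw : IsSepContBdd w) (a b c : ℝ) :
    Continuous fun d => rectIntegral w a b c d :=
  ((hw.swap.continuous_edgeDiff_left c a b).const_smul _).sub (hw.continuous_edgeDiff_right a b c)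

lemma rectIntegral_eq_zero_of_differentiableAt (hw : IsSepContBdd w) {a b c d : ℝ} (hab : a ≤ b)
    (hcd : c ≤ d) (h : ∀ p ∈ Icc a b ×ˢ Icc c d,
      DifferentiableAt ℂ (fun z : ℂ => w z.re z.im) ⟨p.1, p.2⟩) :
    rectIntegral w a b c d = 0 := by
  have hcauchy := Complex.integral_boundary_rect_eq_zero_of_differentiableOn
    (fun z : ℂ => w z.re z.im) ⟨a, c⟩ ⟨b, d⟩ fun z hz => by
      rw [uIcc_of_le hab, uIcc_of_le hcd] at hz
      exact (h (z.re, z.im) hz).differentiableWithinAt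
  simp only [Complex.add_re, Complex.ofReal_re, Complex.re_ofReal_mul, Complex.I_re, mul_zero,
    add_zero, Complex.add_im, Complex.ofReal_im, Complex.im_ofReal_mul, Complex.I_im, mul_one,
    zero_add] at hcauchy
  rw [rectIntegral, hw.edgeDiff_eq_sub, hw.swap.edgeDiff_eq_sub, smul_sub, ← hcauchy]
  simp only [Function.swap]
  abel

end IsSepContBdd

end RectangleIntegral

lemma eq_of_eq_zero_near_ends {G : Type*} [AddCommGroup G] [TopologicalSpace G]
    [ContinuousSub G] [T1Space G] {J : ℝ → ℝ → G} (hadd : ∀ s t u, J s t + J t u = J s u)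
    (hcont : ∀ s, Continuous (J s)) {c c' d' d : ℝ} (hcc' : c ≤ c') (hdd' : d' ≤ d)
    (hc : ∀ t ∈ Ico c c', J c t = 0) (hd : ∀ t ∈ Ioc d' d, J t d = 0) : J c d = J c' d' := by
  have hself : ∀ t, J t t = 0 := fun t => by simpa only [add_eq_left] using hadd t t t
  have hc' : J c c' = 0 := by
    rcases hcc'.eq_or_lt with rfl | hlt
    · exact hself c
    · refine (isClosed_singleton.preimage (hcont c)).closure_subset_iff.2 hc ?_
      rw [closure_Ico hlt.ne]
      exact right_mem_Icc.2 hcc'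
  have hd' : J d' d = 0 := by
    rcases hdd'.eq_or_lt with rfl | hlt
    · exact hself d'
    · have hcont' : Continuous fun t => J t d := by
        rw [funext fun t => eq_sub_of_add_eq' (hadd c t d)]
        exact continuous_const.sub (hcont c)
      refine (isClosed_singleton.preimage hcont').closure_subset_iff.2 hd ?_
      rw [closure_Ioc hlt.ne]
      exact left_mem_Icc.2 hdd'
  rw [← hadd c c' d, ← hadd c' d' d, hc', hd', zero_add, add_zero]

section AxisLipschitz

variable {E : Type*} [NormedAddCommGroup E] {w : ℝ → ℝ → E} {N : ℝ≥0}

/-- The points `p` such that `w` is `N`-Lipschitz at `p` along the two coordinate lines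
through `p`. -/
def axisLipschitzSet (w : ℝ → ℝ → E) (N : ℝ≥0) : Set (ℝ × ℝ) :=
  {p | (∀ t, dist (w t p.2) (w p.1 p.2) ≤ N * dist t p.1) ∧
    ∀ t, dist (w p.1 t) (w p.1 p.2) ≤ N * dist t p.2}

lemma swap_mem_axisLipschitzSet {p : ℝ × ℝ} (hp : p ∈ axisLipschitzSet w N) :
    p.swap ∈ axisLipschitzSet (Function.swap w) N :=
  ⟨hp.2, hp.1⟩

lemma IsSepContBdd.tendsto_of_axisLipschitz (hw : IsSepContBdd w) {p : ℕ → ℝ × ℝ} {q : ℝ × ℝ}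
    (hp : ∀ n, p n ∈ axisLipschitzSet w N) (hpq : Tendsto p atTop (𝓝 q)) :
    Tendsto (fun n => w (p n).1 (p n).2) atTop (𝓝 (w q.1 q.2)) := by
  have h₁ : Tendsto (fun n => w (p n).1 q.2) atTop (𝓝 (w q.1 q.2)) :=
    ((hw.continuous_left q.2).tendsto q.1).comp (continuous_fst.tendsto q |>.comp hpq)
  have h₂ : Tendsto (fun n => (N : ℝ) * dist q.2 (p n).2) atTop (𝓝 (N * dist q.2 q.2)) :=
    (tendsto_const_nhds.dist (continuous_snd.tendsto q |>.comp hpq)).const_mul _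
  rw [dist_self, mul_zero] at h₂
  exact h₁.congr_dist (squeeze_zero (fun _ => dist_nonneg) (fun n => (hp n).2 q.2) h₂)

lemma IsSepContBdd.isClosed_axisLipschitzSet (hw : IsSepContBdd w) (N : ℝ≥0) :
    IsClosed (axisLipschitzSet w N) := by
  refine isClosed_of_closure_subset fun q hq => ?_
  obtain ⟨p, hp, hpq⟩ := mem_closure_iff_seq_limit.1 hq
  have hfst := (continuous_fst.tendsto q).comp hpq
  have hsnd := (continuous_snd.tendsto q).comp hpq
  have hlim := hw.tendsto_of_axisLipschitz hp hpq
  refine ⟨fun t => ?_, fun t => ?_⟩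
  · exact le_of_tendsto_of_tendsto'
      ((((hw.continuous_right t).tendsto q.2).comp hsnd).dist hlim)
      ((tendsto_const_nhds.dist hfst).const_mul _) fun n => (hp n).1 t
  · exact le_of_tendsto_of_tendsto'
      ((((hw.continuous_left t).tendsto q.1).comp hfst).dist hlim)
      ((tendsto_const_nhds.dist hsnd).const_mul _) fun n => (hp n).2 t

end AxisLipschitz

section TightBox

/-- `[a, b] × [c, d]` is the bounding box of the set `S`, and `S` touches all four sides. -/
structure IsTightBox (S : Set (ℝ × ℝ)) (a b c d : ℝ) : Prop where
  subset : S ⊆ Icc a b ×ˢ Icc c d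
  left : ∃ y, (a, y) ∈ S
  right : ∃ y, (b, y) ∈ S
  bottom : ∃ x, (x, c) ∈ S
  top : ∃ x, (x, d) ∈ S

variable {S : Set (ℝ × ℝ)} {a b c d : ℝ}

lemma IsTightBox.swap (h : IsTightBox S a b c d) : IsTightBox (Prod.swap ⁻¹' S) c d a b :=
  ⟨fun _ hp => (h.subset hp).symm, h.bottom, h.top, h.left, h.right⟩

lemma exists_isTightBox_of_isCompact (hS : IsCompact S) (hne : S.Nonempty) :
    ∃ a b c d, IsTightBox S a b c d := by
  obtain ⟨p, hp, hpmin⟩ := hS.exists_isMinOn hne continuous_fst.continuousOn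
  obtain ⟨q, hq, hqmax⟩ := hS.exists_isMaxOn hne continuous_fst.continuousOn
  obtain ⟨r, hr, hrmin⟩ := hS.exists_isMinOn hne continuous_snd.continuousOn
  obtain ⟨s, hs, hsmax⟩ := hS.exists_isMaxOn hne continuous_snd.continuousOn
  exact ⟨p.1, q.1, r.2, s.2, fun z hz => ⟨⟨hpmin hz, hqmax hz⟩, hrmin hz, hsmax hz⟩,
    ⟨p.2, hp⟩, ⟨q.2, hq⟩, ⟨r.1, hr⟩, ⟨s.1, hs⟩⟩

lemma IsTightBox.norm_sub_le {E : Type*} [NormedAddCommGroup E] {w : ℝ → ℝ → E} {N : ℝ≥0}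
    (h : IsTightBox S a b c d) (hS : S ⊆ axisLipschitzSet w N) {x : ℝ} (hx : x ∈ Icc a b) :
    ‖w x d - w x c‖ ≤ N * (3 * (b - a) + (d - c)) := by
  obtain ⟨p, hp⟩ := h.bottom
  obtain ⟨q, hq⟩ := h.top
  have hpI : p ∈ Icc a b := (h.subset hp).1
  have hqI : q ∈ Icc a b := (h.subset hq).1
  have hcd : c ≤ d := (h.subset hp).2.2
  have hdist : ∀ s ∈ Icc a b, ∀ t ∈ Icc a b, N * dist s t ≤ N * (b - a) := fun s hs t ht =>
    mul_le_mul_of_nonneg_left (Real.dist_le_of_mem_Icc hs ht) N.2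
  have hxq : dist (w x d) (w q d) ≤ N * (b - a) := ((hS hq).1 x).trans (hdist x hx q hqI)
  have hqq : dist (w q d) (w q c) ≤ N * (d - c) := by
    simpa only [dist_comm (w q c), dist_comm c, Real.dist_eq d c, abs_of_nonneg (sub_nonneg.2 hcd)]
      using (hS hq).2 c
  have hqp : dist (w q c) (w p c) ≤ N * (b - a) := ((hS hp).1 q).trans (hdist q hqI p hpI)
  have hpx : dist (w p c) (w x c) ≤ N * (b - a) := by
    rw [dist_comm]
    exact ((hS hp).1 x).trans (hdist x hx p hpI)
  rw [← dist_eq_norm]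
  linarith [dist_triangle4 (w x d) (w q d) (w q c) (w p c),
    dist_triangle (w x d) (w p c) (w x c)]

end TightBox

lemma integral_measureReal_slice {α β : Type*} [MeasurableSpace α] [MeasurableSpace β]
    {μ : Measure α} {ν : Measure β} [SFinite μ] [SFinite ν] {T : Set (α × β)}
    (hT : MeasurableSet T) (hTfin : μ.prod ν T ≠ ⊤) :
    ∫ x, ν.real (Prod.mk x ⁻¹' T) ∂μ = (μ.prod ν).real T := by
  simp only [measureReal_def]
  rw [integral_toReal (measurable_measure_prodMk_left hT).aemeasurable
    (Measure.ae_measure_lt_top hT hTfin), Measure.prod_apply hT]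

section VerticalDerivative

variable {E : Type*} [NormedAddCommGroup E] [NormedSpace ℝ E] {w : ℝ → ℝ → E} {D : ℝ × ℝ → E}
  {S : Set (ℝ × ℝ)} {N : ℝ≥0}

lemma stronglyMeasurable_indicator_of_hasDerivAt (hw : StronglyMeasurable (Function.uncurry w))
    (hS : MeasurableSet S) (hD : ∀ p ∈ S, HasDerivAt (w p.1) (D p) p.2) :
    StronglyMeasurable (S.indicator D) := by
  obtain ⟨δ, hδ⟩ := exists_seq_tendsto (𝓝[>] (0 : ℝ))
  refine stronglyMeasurable_of_tendsto atTop (f := fun n => S.indicator fun p =>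
    (δ n)⁻¹ • (w p.1 (p.2 + δ n) - w p.1 p.2)) (fun n => ?_) (tendsto_pi_nhds.2 fun p => ?_)
  · exact (((hw.comp_measurable
      (measurable_fst.prodMk (measurable_snd.add_const (δ n)))).sub hw).const_smul _).indicator hS
  · by_cases hp : p ∈ S
    · simp only [indicator_of_mem hp]
      exact (hD p hp).tendsto_slope_zero_right.comp hδ
    · simpa only [indicator_of_notMem hp] using tendsto_const_nhds

lemma norm_indicator_le_of_hasDerivAt (hSN : S ⊆ axisLipschitzSet w N)
    (hD : ∀ p ∈ S, HasDerivAt (w p.1) (D p) p.2) (p : ℝ × ℝ) : ‖S.indicator D p‖ ≤ N := by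
  by_cases hp : p ∈ S
  · rw [indicator_of_mem hp]
    exact (hD p hp).le_of_lip' N.2
      (.of_forall fun t => by simpa only [dist_eq_norm] using (hSN hp).2 t)
  · simp only [indicator_of_notMem hp, norm_zero, NNReal.coe_nonneg]

variable [CompleteSpace E] {a a' b b' c c' d d' κ : ℝ}

lemma norm_slice_sub_integral_le (hw : StronglyMeasurable (Function.uncurry w))
    (hS : MeasurableSet S) (hSN : S ⊆ axisLipschitzSet w N)
    (hD : ∀ p ∈ S, HasDerivAt (w p.1) (D p) p.2) (hbox : IsTightBox S a' b' c' d')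
    (ha : a ≤ a') (hb : b' ≤ b) (hc : c ≤ c') (hd : d' ≤ d) (hκ₀ : 0 ≤ κ)
    (hκ : b - a ≤ κ * (d - c)) {x : ℝ} (hx : x ∈ Ioc a' b') :
    ‖w x d' - w x c' - ∫ y in c'..d', S.indicator D (x, y)‖
      ≤ (3 * κ + 1) * N * volume.real (Ioc c d \ Prod.mk x ⁻¹' S) := by
  have hN : (0 : ℝ) ≤ N := N.2
  rcases (Prod.mk x ⁻¹' S).eq_empty_or_nonempty with hempty | ⟨y, hy⟩
  · have hzero : ∀ y, S.indicator D (x, y) = 0 := fun y =>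
      indicator_of_notMem (fun hy => (hempty ▸ mem_preimage.2 hy : y ∈ (∅ : Set ℝ))) _
    have hcd : c ≤ d := by
      obtain ⟨p, hp⟩ := hbox.top
      exact hc.trans ((hbox.subset hp).2.1.trans hd)
    simp only [hzero, intervalIntegral.integral_zero, sub_zero, hempty, sdiff_empty,
      Real.volume_real_Ioc_of_le hcd]
    calc ‖w x d' - w x c'‖ ≤ N * (3 * (b' - a') + (d' - c')) :=
          hbox.norm_sub_le hSN (Ioc_subset_Icc_self hx)
      _ ≤ N * (3 * (κ * (d - c)) + (d - c)) := by
          gcongr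
          linarith
      _ = (3 * κ + 1) * N * (d - c) := by ring
  · have hint : IntervalIntegrable (fun y => S.indicator D (x, y)) volume c' d' :=
      (intervalIntegrable_const (c := (N : ℝ))).mono_fun
        ((stronglyMeasurable_indicator_of_hasDerivAt hw hS hD).comp_measurable
          measurable_prodMk_left).aestronglyMeasurable
        (.of_forall fun y => by
          simpa using norm_indicator_le_of_hasDerivAt hSN hD (x, y))
    calc ‖w x d' - w x c' - ∫ y in c'..d', S.indicator D (x, y)‖
        ≤ N * volume.real (Ioc c' d' \ Prod.mk x ⁻¹' S) :=
          norm_sub_sub_integral_indicator_le (hS.preimage measurable_prodMk_left)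
            (fun s hs => (hSN hs).2) (fun s hs => hD _ hs) hint ⟨y, hy, (hbox.subset hy).2⟩
      _ ≤ (3 * κ + 1) * N * volume.real (Ioc c d \ Prod.mk x ⁻¹' S) := by
          gcongr ?_ * ?_
          · exact le_mul_of_one_le_left hN (by linarith)
          · exact measureReal_mono (sdiff_subset_sdiff_left (Ioc_subset_Ioc hc hd))
              ((measure_mono sdiff_subset).trans_lt measure_Ioc_lt_top).ne

lemma norm_edgeDiff_sub_integral_le (hw : IsSepContBdd w)
    (hS : MeasurableSet S) (hSN : S ⊆ axisLipschitzSet w N)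
    (hD : ∀ p ∈ S, HasDerivAt (w p.1) (D p) p.2) (hbox : IsTightBox S a' b' c' d')
    (ha : a ≤ a') (hb : b' ≤ b) (hc : c ≤ c') (hd : d' ≤ d) (hκ₀ : 0 ≤ κ)
    (hκ : b - a ≤ κ * (d - c)) :
    ‖edgeDiff w a' b' c' d' - ∫ x in a'..b', ∫ y in c'..d', S.indicator D (x, y)‖
      ≤ (3 * κ + 1) * N * volume.real ((Ioc a b ×ˢ Ioc c d) \ S) := by
  have hab' : a' ≤ b' := hbox.top.elim fun _ hp => (hbox.subset hp).1.1.trans (hbox.subset hp).1.2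
  have hcd' : c' ≤ d' := hbox.left.elim fun _ hp => (hbox.subset hp).2.1.trans (hbox.subset hp).2.2
  set T : Set (ℝ × ℝ) := (Ioc a b ×ˢ Ioc c d) \ S
  have hT : MeasurableSet T := (measurableSet_Ioc.prod measurableSet_Ioc).diff hS
  have hTfin : volume T ≠ ⊤ := ((measure_mono sdiff_subset).trans_lt
    ((Metric.isBounded_Ioc a b).prod (Metric.isBounded_Ioc c d)).measure_lt_top).ne
  have hslices : Integrable fun x => volume.real (Prod.mk x ⁻¹' T) :=
    Measure.integrable_measure_prodMk_left hT hTfin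
  have hint : Integrable (fun x => ∫ y in c'..d', S.indicator D (x, y))
      (volume.restrict (Ioc a' b')) := by
    simp only [intervalIntegral.integral_of_le hcd']
    exact (Integrable.of_bound
      (stronglyMeasurable_indicator_of_hasDerivAt hw.stronglyMeasurable hS hD).aestronglyMeasurable
      N (.of_forall (norm_indicator_le_of_hasDerivAt hSN hD))).integral_prod_left
  rw [edgeDiff, ← intervalIntegral.integral_sub
    ((hw.intervalIntegrable d' a' b').sub (hw.intervalIntegrable c' a' b'))
    ((intervalIntegrable_iff_integrableOn_Ioc_of_le hab').2 hint)]
  calc ‖∫ x in a'..b', (w x d' - w x c' - ∫ y in c'..d', S.indicator D (x, y))‖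
      ≤ ∫ x in a'..b', (3 * κ + 1) * N * volume.real (Prod.mk x ⁻¹' T) := by
        refine intervalIntegral.norm_integral_le_of_norm_le hab' (.of_forall fun x hx => ?_)
          (hslices.const_mul _).intervalIntegrable
        have hTx : Prod.mk x ⁻¹' T = Ioc c d \ Prod.mk x ⁻¹' S := by
          rw [preimage_sdiff, mk_preimage_prod_right (Ioc_subset_Ioc ha hb hx)]
        rw [hTx]
        exact norm_slice_sub_integral_le hw.stronglyMeasurable hS hSN hD hbox ha hb hc hd hκ₀ hκ hx
    _ ≤ (3 * κ + 1) * N * ∫ x, volume.real (Prod.mk x ⁻¹' T) := by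
        rw [intervalIntegral.integral_const_mul, intervalIntegral.integral_of_le hab']
        gcongr
        · exact .of_forall fun _ => measureReal_nonneg
        · exact Measure.restrict_le_self
    _ = (3 * κ + 1) * N * volume.real T := by rw [integral_measureReal_slice hT hTfin]; rfl

end VerticalDerivative

section CauchyRiemann

variable {E : Type*} [NormedAddCommGroup E] [NormedSpace ℂ E] {w : ℝ → ℝ → E}
  {D : ℝ × ℝ → E} {S : Set (ℝ × ℝ)} {N : ℝ≥0} {a a' b b' c c' d d' κ : ℝ}

/-- The Cauchy–Riemann equations at the point `p`: `g` is the partial derivative in the real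
direction and `I • g` the one in the imaginary direction. -/
structure HasCRDerivAt (w : ℝ → ℝ → E) (g : E) (p : ℝ × ℝ) : Prop where
  left : HasDerivAt (fun x => w x p.2) g p.1
  right : HasDerivAt (w p.1) (Complex.I • g) p.2

lemma IsTightBox.norm_rectIntegral_le [CompleteSpace E] (hbox : IsTightBox S a' b' c' d')
    (hw : IsSepContBdd w) (hS : MeasurableSet S) (hSN : S ⊆ axisLipschitzSet w N)
    (hD : ∀ p ∈ S, HasCRDerivAt w (D p) p) (ha : a ≤ a') (hb : b' ≤ b) (hc : c ≤ c')
    (hd : d' ≤ d) (hκ₀ : 0 ≤ κ) (hκ : b - a ≤ κ * (d - c)) (hκ' : d - c ≤ κ * (b - a)) :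
    ‖rectIntegral w a' b' c' d'‖
      ≤ 2 * ((3 * κ + 1) * N) * volume.real ((Ioc a b ×ˢ Ioc c d) \ S) := by
  have hhoriz := norm_edgeDiff_sub_integral_le hw hS hSN (fun p hp => (hD p hp).right) hbox
    ha hb hc hd hκ₀ hκ
  have hvert := norm_edgeDiff_sub_integral_le (D := D ∘ Prod.swap) hw.swap
    (hS.preimage measurable_swap) (fun p hp => swap_mem_axisLipschitzSet (hSN hp))
    (fun p hp => (hD _ hp).left) hbox.swap hc hd ha hb hκ₀ hκ'
  have hvol : volume.real ((Ioc c d ×ˢ Ioc a b) \ Prod.swap ⁻¹' S)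
      = volume.real ((Ioc a b ×ˢ Ioc c d) \ S) := by
    rw [← preimage_swap_prod, ← preimage_sdiff]
    exact Measure.measurePreserving_swap.measureReal_preimage
      ((measurableSet_Ioc.prod measurableSet_Ioc).diff hS).nullMeasurableSet
  have hfubini : ∫ x in a'..b', ∫ y in c'..d', S.indicator (fun p => Complex.I • D p) (x, y)
      = Complex.I • ∫ y in c'..d', ∫ x in a'..b',
        (Prod.swap ⁻¹' S).indicator (D ∘ Prod.swap) (y, x) := by
    rw [intervalIntegral_swap_of_bounded
      (stronglyMeasurable_indicator_of_hasDerivAt hw.stronglyMeasurable hS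
        fun p hp => (hD p hp).right)
      (norm_indicator_le_of_hasDerivAt hSN fun p hp => (hD p hp).right)]
    simp only [indicator_const_smul, intervalIntegral.integral_smul]
    rfl
  rw [hfubini] at hhoriz
  rw [hvol] at hvert
  calc ‖rectIntegral w a' b' c' d'‖
      = ‖Complex.I • (edgeDiff (Function.swap w) c' d' a' b' - ∫ y in c'..d', ∫ x in a'..b',
          (Prod.swap ⁻¹' S).indicator (D ∘ Prod.swap) (y, x))
        - (edgeDiff w a' b' c' d' - Complex.I • ∫ y in c'..d', ∫ x in a'..b',
          (Prod.swap ⁻¹' S).indicator (D ∘ Prod.swap) (y, x))‖ := by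
        rw [rectIntegral, smul_sub, sub_sub_sub_cancel_right]
    _ ≤ _ := norm_sub_le_of_le ((norm_smul_le _ _).trans_eq (by rw [Complex.norm_I, one_mul])
        |>.trans hvert) hhoriz
    _ = _ := by ring

lemma IsTightBox.rectIntegral_eq (hbox : IsTightBox (S ∩ Icc a b ×ˢ Icc c d) a' b' c' d')
    (hw : IsSepContBdd w) (hhol : ∀ p ∈ Icc a b ×ˢ Icc c d, p ∉ S →
      DifferentiableAt ℂ (fun z : ℂ => w z.re z.im) ⟨p.1, p.2⟩) :
    rectIntegral w a b c d = rectIntegral w a' b' c' d' := by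
  have hzero : ∀ {s t y z}, a ≤ s → s ≤ t → t ≤ b → c ≤ y → y ≤ z → z ≤ d →
      (t < a' ∨ b' < s ∨ z < c' ∨ d' < y) → rectIntegral w s t y z = 0 := by
    intro s t y z has hst htb hcy hyz hzd hout
    refine hw.rectIntegral_eq_zero_of_differentiableAt hst hyz fun p ⟨hpx, hpy⟩ => ?_
    have hpR : p ∈ Icc a b ×ˢ Icc c d :=
      ⟨Icc_subset_Icc has htb hpx, Icc_subset_Icc hcy hzd hpy⟩
    refine hhol p hpR fun hpS => ?_
    obtain ⟨hpx', hpy'⟩ := hbox.subset ⟨hpS, hpR⟩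
    rcases hout with h | h | h | h
    · exact absurd (hpx'.1.trans hpx.2) h.not_ge
    · exact absurd (hpx.1.trans hpx'.2) h.not_ge
    · exact absurd (hpy'.1.trans hpy.2) h.not_ge
    · exact absurd (hpy.1.trans hpy'.2) h.not_ge
  obtain ⟨⟨yl, hl⟩, ⟨yr, hr⟩, ⟨xb, hb⟩, xt, ht⟩ :=
    And.intro hbox.left (And.intro hbox.right (And.intro hbox.bottom hbox.top))
  have hcd' : c' ≤ d' := (hbox.subset hl).2.1.trans (hbox.subset hl).2.2
  calc rectIntegral w a b c d = rectIntegral w a b c' d' := by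
        refine eq_of_eq_zero_near_ends (J := fun s t => rectIntegral w a b s t)
          (hw.rectIntegral_add_right a b) (hw.continuous_rectIntegral_right a b)
          hb.2.2.1 ht.2.2.2 (fun t ht' => ?_) (fun t ht' => ?_)
        · exact hzero le_rfl (hb.2.1.1.trans hb.2.1.2) le_rfl le_rfl ht'.1
            (ht'.2.le.trans hb.2.2.2) (.inr (.inr (.inl ht'.2)))
        · exact hzero le_rfl (hb.2.1.1.trans hb.2.1.2) le_rfl (ht.2.2.1.trans ht'.1.le) ht'.2
            le_rfl (.inr (.inr (.inr ht'.1)))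
    _ = rectIntegral w a' b' c' d' := by
        refine eq_of_eq_zero_near_ends (J := fun s t => rectIntegral w s t c' d')
          (fun s t u => hw.rectIntegral_add_left s t u c' d')
          (fun s => hw.continuous_rectIntegral_left s c' d')
          hl.2.1.1 hr.2.1.2 (fun t ht' => ?_) (fun t ht' => ?_)
        · exact hzero le_rfl ht'.1 (ht'.2.le.trans hl.2.1.2) hb.2.2.1 hcd' ht.2.2.2
            (.inl ht'.2)
        · exact hzero (hr.2.1.1.trans ht'.1.le) ht'.2 le_rfl hb.2.2.1 hcd' ht.2.2.2
            (.inr (.inl ht'.1))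

lemma norm_rectIntegral_le_of_isCompact [CompleteSpace E] (hw : IsSepContBdd w) (hS : IsCompact S)
    (hSN : S ⊆ axisLipschitzSet w N) (hD : ∀ p ∈ S, HasCRDerivAt w (D p) p)
    (hhol : ∀ p ∈ Icc a b ×ˢ Icc c d, p ∉ S →
      DifferentiableAt ℂ (fun z : ℂ => w z.re z.im) ⟨p.1, p.2⟩)
    (hne : (S ∩ Icc a b ×ˢ Icc c d).Nonempty) (hκ₀ : 0 ≤ κ) (hκ : b - a ≤ κ * (d - c))
    (hκ' : d - c ≤ κ * (b - a)) :
    ‖rectIntegral w a b c d‖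
      ≤ 2 * ((3 * κ + 1) * N) * volume.real ((Ioc a b ×ˢ Ioc c d) \ S) := by
  have hSR : IsCompact (S ∩ Icc a b ×ˢ Icc c d) :=
    hS.inter_right (isClosed_Icc.prod isClosed_Icc)
  obtain ⟨a', b', c', d', hbox⟩ := exists_isTightBox_of_isCompact hSR hne
  have hdiff : (Ioc a b ×ˢ Ioc c d) \ (S ∩ Icc a b ×ˢ Icc c d) = (Ioc a b ×ˢ Ioc c d) \ S := by
    rw [sdiff_inter, sdiff_eq_empty.2 (Set.prod_mono Ioc_subset_Icc_self Ioc_subset_Icc_self),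
      union_empty]
  rw [hbox.rectIntegral_eq hw hhol, ← hdiff]
  exact hbox.norm_rectIntegral_le hw hSR.measurableSet (inter_subset_left.trans hSN)
    (fun p hp => hD p hp.1) (hbox.left.elim fun _ h => h.2.1.1) (hbox.right.elim fun _ h => h.2.1.2)
    (hbox.bottom.elim fun _ h => h.2.2.1) (hbox.top.elim fun _ h => h.2.2.2) hκ₀ hκ hκ'

end CauchyRiemann

section Subdivision

lemma interval_dyadic_induction {P : ℝ → ℝ → Prop}
    (hP : ∀ a b c, a ≤ b → b ≤ c → P a b → P b c → P a c) (n : ℕ) {a b : ℝ} (hab : a ≤ b)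
    (h : ∀ s t, a ≤ s → s ≤ t → t ≤ b → t - s = (b - a) / 2 ^ n → P s t) : P a b := by
  induction n generalizing a b with
  | zero => exact h a b le_rfl hab le_rfl (by rw [pow_zero, div_one])
  | succ n ih =>
    have ham : a ≤ (a + b) / 2 := by linarith
    have hmb : (a + b) / 2 ≤ b := by linarith
    refine hP a ((a + b) / 2) b ham hmb (ih ham fun s t hs hst ht hlen => ?_)
      (ih hmb fun s t hs hst ht hlen => ?_)
    · exact h s t hs hst (ht.trans hmb) (by rw [hlen]; ring)
    · exact h s t (ham.trans hs) hst ht (by rw [hlen]; ring)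

variable {E : Type*} [NormedAddCommGroup E] [NormedSpace ℂ E] {w : ℝ → ℝ → E}
  {ν : Measure (ℝ × ℝ)} [IsFiniteMeasure ν] {K a b c d : ℝ}

lemma measureReal_Ioc_prod_add {s t u : ℝ} (hst : s ≤ t) (htu : t ≤ u) {B : Set ℝ}
    (hB : MeasurableSet B) :
    ν.real (Ioc s t ×ˢ B) + ν.real (Ioc t u ×ˢ B) = ν.real (Ioc s u ×ˢ B) := by
  rw [← Ioc_union_Ioc_eq_Ioc hst htu, union_prod, measureReal_union
    (Disjoint.set_prod_left (Ioc_disjoint_Ioc_of_le le_rfl) _ _) (measurableSet_Ioc.prod hB)]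

lemma measureReal_prod_Ioc_add {s t u : ℝ} (hst : s ≤ t) (htu : t ≤ u) {B : Set ℝ}
    (hB : MeasurableSet B) :
    ν.real (B ×ˢ Ioc s t) + ν.real (B ×ˢ Ioc t u) = ν.real (B ×ˢ Ioc s u) := by
  rw [← Ioc_union_Ioc_eq_Ioc hst htu, prod_union, measureReal_union
    (Disjoint.set_prod_right (Ioc_disjoint_Ioc_of_le le_rfl) _ _) (hB.prod measurableSet_Ioc)]

lemma IsSepContBdd.norm_rectIntegral_le_of_pieces (hw : IsSepContBdd w) (hab : a ≤ b)
    (hcd : c ≤ d) (n : ℕ)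
    (h : ∀ s t y z, a ≤ s → s ≤ t → t ≤ b → c ≤ y → y ≤ z → z ≤ d → t - s = (b - a) / 2 ^ n →
      z - y = (d - c) / 2 ^ n → ‖rectIntegral w s t y z‖ ≤ K * ν.real (Ioc s t ×ˢ Ioc y z)) :
    ‖rectIntegral w a b c d‖ ≤ K * ν.real (Ioc a b ×ˢ Ioc c d) := by
  refine interval_dyadic_induction
    (P := fun s t => ‖rectIntegral w s t c d‖ ≤ K * ν.real (Ioc s t ×ˢ Ioc c d))
    (fun s t u hst htu h₁ h₂ => ?_) n hab fun s t has hst htb hlen => ?_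
  · rw [← hw.rectIntegral_add_left s t u, ← measureReal_Ioc_prod_add hst htu measurableSet_Ioc,
      mul_add]
    exact norm_add_le_of_le h₁ h₂
  · refine interval_dyadic_induction
      (P := fun y z => ‖rectIntegral w s t y z‖ ≤ K * ν.real (Ioc s t ×ˢ Ioc y z))
      (fun y z u hyz hzu h₁ h₂ => ?_) n hcd fun y z hcy hyz hzd hlen' =>
        h s t y z has hst htb hcy hyz hzd hlen hlen'
    rw [← hw.rectIntegral_add_right s t y z u, ← measureReal_prod_Ioc_add hyz hzu measurableSet_Ioc,
      mul_add]
    exact norm_add_le_of_le h₁ h₂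

end Subdivision

section Covering

variable {E : Type*} [NormedAddCommGroup E] [NormedSpace ℂ E] [CompleteSpace E] {w : ℝ → ℝ → E}
  {D : ℝ × ℝ → E} {S V : Set (ℝ × ℝ)} {N : ℝ≥0} {a b c d κ : ℝ}

lemma IsSepContBdd.norm_rectIntegral_le_of_subset_isOpen (hw : IsSepContBdd w) (hab : a ≤ b)
    (hcd : c ≤ d) (hS : IsCompact S) (hSN : S ⊆ axisLipschitzSet w N)
    (hD : ∀ p ∈ S, HasCRDerivAt w (D p) p)
    (hhol : ∀ p ∈ Icc a b ×ˢ Icc c d, p ∉ S →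
      DifferentiableAt ℂ (fun z : ℂ => w z.re z.im) ⟨p.1, p.2⟩)
    (hκ₀ : 0 ≤ κ) (hκ : b - a ≤ κ * (d - c)) (hκ' : d - c ≤ κ * (b - a))
    (hV : IsOpen V) (hSV : S ⊆ V) (hVfin : volume (V \ S) ≠ ⊤) :
    ‖rectIntegral w a b c d‖ ≤ 2 * ((3 * κ + 1) * N) * volume.real (V \ S) := by
  obtain ⟨δ, hδ, hthick⟩ := hS.exists_thickening_subset_open hV hSV
  obtain ⟨n, hn⟩ := pow_unbounded_of_one_lt ((b - a + (d - c)) / δ) one_lt_two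
  have hmesh : (b - a) / 2 ^ n + (d - c) / 2 ^ n < δ := by
    rw [← add_div, div_lt_comm₀ (by positivity) hδ]
    exact hn
  have : IsFiniteMeasure (volume.restrict (V \ S)) :=
    ⟨by simpa only [Measure.restrict_apply_univ] using hVfin.lt_top⟩
  refine (hw.norm_rectIntegral_le_of_pieces (ν := volume.restrict (V \ S))
    (K := 2 * ((3 * κ + 1) * N)) hab hcd n ?_).trans ?_
  · intro s t y z has hst htb hcy hyz hzd hts hzy
    have hIcc : Icc s t ×ˢ Icc y z ⊆ Icc a b ×ˢ Icc c d :=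
      Set.prod_mono (Icc_subset_Icc has htb) (Icc_subset_Icc hcy hzd)
    rcases (S ∩ Icc s t ×ˢ Icc y z).eq_empty_or_nonempty with hempty | ⟨q, hqS, hq⟩
    · rw [hw.rectIntegral_eq_zero_of_differentiableAt hst hyz fun p hp =>
        hhol p (hIcc hp) fun hpS => eq_empty_iff_forall_notMem.1 hempty p ⟨hpS, hp⟩, norm_zero]
      positivity
    have hsub : Ioc s t ×ˢ Ioc y z ⊆ V := fun p hp => by
      refine hthick (Metric.mem_thickening_iff.2 ⟨q, hqS, max_lt ?_ ?_⟩)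
      · linarith [Real.dist_le_of_mem_Icc (Ioc_subset_Icc_self hp.1) hq.1, sub_nonneg.2 hyz]
      · linarith [Real.dist_le_of_mem_Icc (Ioc_subset_Icc_self hp.2) hq.2, sub_nonneg.2 hst]
    rw [measureReal_restrict_apply (measurableSet_Ioc.prod measurableSet_Ioc), ← inter_sdiff_assoc,
      inter_eq_left.2 hsub]
    refine norm_rectIntegral_le_of_isCompact hw hS hSN hD (fun p hp => hhol p (hIcc hp))
      ⟨q, hqS, hq⟩ hκ₀ ?_ ?_
    · rw [hts, hzy, ← mul_div_assoc]
      gcongr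
    · rw [hts, hzy, ← mul_div_assoc]
      gcongr
  · rw [measureReal_restrict_apply (measurableSet_Ioc.prod measurableSet_Ioc)]
    gcongr
    exact inter_subset_right

lemma IsSepContBdd.rectIntegral_eq_zero_of_isCompact (hw : IsSepContBdd w) (hab : a ≤ b)
    (hcd : c ≤ d) (hS : IsCompact S) (hSN : S ⊆ axisLipschitzSet w N)
    (hD : ∀ p ∈ S, HasCRDerivAt w (D p) p)
    (hhol : ∀ p ∈ Icc a b ×ˢ Icc c d, p ∉ S →
      DifferentiableAt ℂ (fun z : ℂ => w z.re z.im) ⟨p.1, p.2⟩) :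
    rectIntegral w a b c d = 0 := by
  rcases hab.eq_or_lt with rfl | hab'
  · simpa only [add_eq_left] using hw.rectIntegral_add_left a a a c d
  rcases hcd.eq_or_lt with rfl | hcd'
  · simpa only [add_eq_left] using hw.rectIntegral_add_right a b c c c
  have hκ := le_max_left ((b - a) / (d - c)) ((d - c) / (b - a))
  have hκ' := le_max_right ((b - a) / (d - c)) ((d - c) / (b - a))
  set κ := max ((b - a) / (d - c)) ((d - c) / (b - a))
  have hκ₀ : 0 ≤ κ := (div_nonneg (sub_nonneg.2 hab) (sub_nonneg.2 hcd)).trans hκ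
  have hsmall : ∀ ε > 0, ‖rectIntegral w a b c d‖ ≤ 2 * ((3 * κ + 1) * N) * ε := fun ε hε => by
    obtain ⟨V, hSV, hV, -, hvol⟩ := hS.measurableSet.exists_isOpen_sdiff_lt
      (μ := volume) hS.measure_lt_top.ne (ENNReal.ofReal_pos.2 hε).ne'
    refine (hw.norm_rectIntegral_le_of_subset_isOpen hab hcd hS hSN hD hhol hκ₀
      ((div_le_iff₀ (sub_pos.2 hcd')).1 hκ) ((div_le_iff₀ (sub_pos.2 hab')).1 hκ') hV hSV
      hvol.ne_top).trans ?_
    gcongr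
    exact ENNReal.toReal_le_of_le_ofReal hε.le hvol.le
  have hlim : Tendsto (fun ε => 2 * ((3 * κ + 1) * N) * ε) (𝓝[>] (0 : ℝ)) (𝓝 0) := by
    simpa only [mul_zero] using ((continuous_const_mul (2 * ((3 * κ + 1) * (N : ℝ)))).tendsto
      0).mono_left nhdsWithin_le_nhds
  exact norm_le_zero_iff.1 (ge_of_tendsto hlim (eventually_mem_nhdsWithin.mono hsmall))

end Covering

section Morera

lemma hasDerivAt_complexMk_left (x y : ℝ) : HasDerivAt (fun x : ℝ => (⟨x, y⟩ : ℂ)) 1 x := by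
  simp only [Complex.mk_eq_add_mul_I]
  exact Complex.ofRealCLM.hasDerivAt.add_const _

lemma hasDerivAt_complexMk_right (x y : ℝ) :
    HasDerivAt (fun y : ℝ => (⟨x, y⟩ : ℂ)) Complex.I y := by
  simp only [Complex.mk_eq_add_mul_I]
  simpa using! (Complex.ofRealCLM.hasDerivAt.mul_const Complex.I).const_add (x : ℂ)

variable {E : Type*} [NormedAddCommGroup E] [NormedSpace ℂ E] {w : ℝ → ℝ → E} {X Y : Set ℝ}

/-- On the product `X ×ℂ Y`, the function `F` is a primitive of the separately continuous
function `z ↦ w z.re z.im` along every horizontal and every vertical segment. -/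
structure IsAxisPrimitiveOn (F : ℂ → E) (w : ℝ → ℝ → E) (X Y : Set ℝ) : Prop where
  left : ∀ x ∈ X, ∀ x' ∈ X, ∀ y ∈ Y, F ⟨x', y⟩ - F ⟨x, y⟩ = ∫ t in x..x', w t y
  right : ∀ x ∈ X, ∀ y ∈ Y, ∀ y' ∈ Y,
    F ⟨x, y'⟩ - F ⟨x, y⟩ = Complex.I • ∫ t in y..y', w x t

lemma IsSepContBdd.exists_isAxisPrimitiveOn (hw : IsSepContBdd w) {y₀ : ℝ} (hy₀ : y₀ ∈ Y)
    (h : ∀ a ∈ X, ∀ b ∈ X, ∀ c ∈ Y, ∀ d ∈ Y, rectIntegral w a b c d = 0) :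
    ∃ F, IsAxisPrimitiveOn F w X Y := by
  have hright : ∀ x y y', (∫ t in y₀..y', w x t) - ∫ t in y₀..y, w x t = ∫ t in y..y', w x t :=
    fun x y y' => intervalIntegral.integral_interval_sub_left
      (hw.swap.intervalIntegrable x y₀ y') (hw.swap.intervalIntegrable x y₀ y)
  have hleft : ∀ y x x', (∫ t in 0..x', w t y) - ∫ t in 0..x, w t y = ∫ t in x..x', w t y :=
    fun y x x' => intervalIntegral.integral_interval_sub_left
      (hw.intervalIntegrable y 0 x') (hw.intervalIntegrable y 0 x)
  refine ⟨fun z => (∫ t in 0..z.re, w t y₀) + Complex.I • ∫ t in y₀..z.im, w z.re t,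
    fun x hx x' hx' y hy => ?_, fun x _ y _ y' _ => ?_⟩
  · have hrect := h x hx x' hx' y₀ hy₀ y hy
    rw [rectIntegral, hw.edgeDiff_eq_sub, hw.swap.edgeDiff_eq_sub, sub_eq_zero, smul_sub] at hrect
    simp only [Function.swap] at hrect
    rw [add_sub_add_comm, hleft, hrect, add_sub_cancel]
  · rw [add_sub_add_left_eq_sub, ← smul_sub, hright]

namespace IsAxisPrimitiveOn

variable {F : ℂ → E}

lemma continuousOn (hF : IsAxisPrimitiveOn F w X Y) (hw : IsSepContBdd w) :
    ContinuousOn F (X ×ℂ Y) := by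
  obtain ⟨C, hC⟩ := hw.bounded
  have hbound : ∀ z ∈ X ×ℂ Y, ∀ z' ∈ X ×ℂ Y, dist (F z') (F z)
      ≤ C * |z'.re - z.re| + C * |z'.im - z.im| := by
    rintro z ⟨hx, hy⟩ z' ⟨hx', hy'⟩
    calc dist (F z') (F z) ≤ dist (F ⟨z'.re, z'.im⟩) (F ⟨z.re, z'.im⟩)
          + dist (F ⟨z.re, z'.im⟩) (F ⟨z.re, z.im⟩) := dist_triangle _ _ _
      _ ≤ _ := by
        rw [dist_eq_norm, dist_eq_norm, hF.left _ hx _ hx' _ hy', hF.right _ hx _ hy _ hy',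
          norm_smul, Complex.norm_I, one_mul]
        exact add_le_add (intervalIntegral.norm_integral_le_of_norm_le_const fun t _ => hC t _)
          (intervalIntegral.norm_integral_le_of_norm_le_const fun t _ => hC _ t)
  intro z hz
  refine tendsto_iff_dist_tendsto_zero.2 (squeeze_zero' (.of_forall fun _ => dist_nonneg)
    (eventually_mem_nhdsWithin.mono fun z' hz' => hbound z hz z' hz') ?_)
  have hcont : Continuous fun z' : ℂ => C * |z'.re - z.re| + C * |z'.im - z.im| := by fun_prop
  simpa only [sub_self, abs_zero, mul_zero, add_zero] using
    (hcont.tendsto z).mono_left nhdsWithin_le_nhds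

lemma isConservativeOn (hF : IsAxisPrimitiveOn F w X Y) (hw : IsSepContBdd w) :
    Complex.IsConservativeOn F (X ×ℂ Y) := by
  intro z z' hrect
  have hX : ∀ x ∈ uIcc z.re z'.re, x ∈ X := fun x hx => (hrect ⟨hx, left_mem_uIcc⟩ :
    (⟨x, z.im⟩ : ℂ) ∈ X ×ℂ Y).1
  have hY : ∀ y ∈ uIcc z.im z'.im, y ∈ Y := fun y hy => (hrect ⟨left_mem_uIcc, hy⟩ :
    (⟨z.re, y⟩ : ℂ) ∈ X ×ℂ Y).2
  have hcont := hF.continuousOn hw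
  have hhoriz : ∀ y ∈ uIcc z.im z'.im,
      IntervalIntegrable (fun x => F ⟨x, y⟩) volume z.re z'.re := fun y hy => by
    exact (hcont.comp (fun x _ => (hasDerivAt_complexMk_left x y).continuousAt.continuousWithinAt)
      fun x hx => ⟨hX x hx, hY y hy⟩).intervalIntegrable
  have hvert : ∀ x ∈ uIcc z.re z'.re,
      IntervalIntegrable (fun y => F ⟨x, y⟩) volume z.im z'.im := fun x hx => by
    exact (hcont.comp (fun y _ => (hasDerivAt_complexMk_right x y).continuousAt.continuousWithinAt)
      fun y hy => ⟨hX x hx, hY y hy⟩).intervalIntegrable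
  obtain ⟨C, hC⟩ := hw.bounded
  rw [← add_eq_zero_iff_eq_neg, Complex.wedgeIntegral_add_wedgeIntegral_eq]
  simp only [← Complex.mk_eq_add_mul_I]
  rw [← intervalIntegral.integral_sub (hhoriz _ left_mem_uIcc) (hhoriz _ right_mem_uIcc),
    add_sub_assoc, ← smul_sub,
    ← intervalIntegral.integral_sub (hvert _ right_mem_uIcc) (hvert _ left_mem_uIcc),
    intervalIntegral.integral_congr fun x hx =>
      hF.right x (hX x hx) z'.im (hY _ right_mem_uIcc) z.im (hY _ left_mem_uIcc),
    intervalIntegral.integral_congr fun y hy =>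
      hF.left z.re (hX _ left_mem_uIcc) z'.re (hX _ right_mem_uIcc) y (hY y hy),
    intervalIntegral.integral_smul,
    intervalIntegral_swap_of_bounded (F := fun p => w p.1 p.2) hw.stronglyMeasurable
      (fun p => hC p.1 p.2), intervalIntegral.integral_symm z.im z'.im]
  rw [smul_neg, neg_add_cancel]

lemma differentiableAt [CompleteSpace E] (hF : IsAxisPrimitiveOn F w X Y) (hw : IsSepContBdd w)
    {z : ℂ} (hz : X ×ℂ Y ∈ 𝓝 z) : DifferentiableAt ℂ (fun z : ℂ => w z.re z.im) z := by
  obtain ⟨r, hr, hball⟩ := Metric.mem_nhds_iff.1 hz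
  have hFdiff : DifferentiableOn ℂ F (Metric.ball z r) :=
    (Complex.IsConservativeOn.isExactOn_ball ((hF.continuousOn hw).mono hball)
      ((hF.isConservativeOn hw).mono hball)).differentiableOn Metric.isOpen_ball
  have hderiv : EqOn (fun z : ℂ => w z.re z.im) (deriv F) (Metric.ball z r) := by
    intro u hu
    have huXY : X ×ℂ Y ∈ 𝓝 u := mem_of_superset (Metric.isOpen_ball.mem_nhds hu) hball
    have hdF : HasDerivAt (fun x : ℝ => F ⟨x, u.im⟩) (deriv F u) u.re := by
      simpa only [one_smul] using! (hFdiff.differentiableAt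
        (Metric.isOpen_ball.mem_nhds hu)).hasDerivAt.scomp_of_eq u.re
        (hasDerivAt_complexMk_left u.re u.im) rfl
    have hdw : HasDerivAt (fun x : ℝ => F ⟨x, u.im⟩) (w u.re u.im) u.re := by
      refine (((hw.continuous_left u.im).integral_hasStrictDerivAt u.re u.re).hasDerivAt.const_add
        (F u)).congr_of_eventuallyEq ?_
      filter_upwards [(hasDerivAt_complexMk_left u.re u.im).continuousAt huXY] with x hx
      obtain ⟨hu₁, hu₂⟩ := mem_of_mem_nhds huXY
      rw [← hF.left u.re hu₁ x hx.1 u.im hu₂, add_sub_cancel]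
    exact hdw.unique hdF
  exact ((hFdiff.deriv Metric.isOpen_ball).congr hderiv).differentiableAt
    (Metric.ball_mem_nhds z hr)

end IsAxisPrimitiveOn

lemma IsSepContBdd.differentiableAt_of_rectIntegral_eq_zero [CompleteSpace E]
    (hw : IsSepContBdd w)
    (h : ∀ a ∈ X, ∀ b ∈ X, ∀ c ∈ Y, ∀ d ∈ Y, a ≤ b → c ≤ d → rectIntegral w a b c d = 0)
    {z : ℂ} (hz : X ×ℂ Y ∈ 𝓝 z) : DifferentiableAt ℂ (fun z : ℂ => w z.re z.im) z := by
  obtain ⟨F, hF⟩ := hw.exists_isAxisPrimitiveOn (mem_of_mem_nhds hz).2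
    fun a ha b hb c hc d hd => rectIntegral_eq_zero_of_forall_le h ha hb hc hd
  exact hF.differentiableAt hw hz

end Morera

section Tolstov

variable {E : Type*} [NormedAddCommGroup E]

lemma exists_dist_le_of_hasDerivAt [NormedSpace ℝ E] {u : ℝ → E} {u' : E} {x C : ℝ}
    (hu : HasDerivAt u u' x) (hC : ∀ t, ‖u t‖ ≤ C) : ∃ K, ∀ t, dist (u t) (u x) ≤ K * dist t x := by
  obtain ⟨K, hK⟩ := hu.differentiableAt.isBigO_sub.bound
  obtain ⟨δ, hδ, hball⟩ := Metric.eventually_nhds_iff.1 hK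
  refine ⟨max K (2 * C / δ), fun t => ?_⟩
  rcases lt_or_ge (dist t x) δ with ht | ht
  · rw [dist_eq_norm, dist_eq_norm]
    exact (hball ht).trans (by gcongr; exact le_max_left _ _)
  · have hC₀ : 0 ≤ C := (norm_nonneg _).trans (hC x)
    calc dist (u t) (u x) ≤ 2 * C := by
          rw [dist_eq_norm, two_mul]
          exact norm_sub_le_of_le (hC t) (hC x)
      _ = 2 * C / δ * δ := (div_mul_cancel₀ _ hδ.ne').symm
      _ ≤ max K (2 * C / δ) * dist t x := by
          gcongr
          exact le_max_right _ _

lemma isSepContBdd_projIcc {f : ℂ → E} {a b c d C : ℝ} (hab : a ≤ b) (hcd : c ≤ d)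
    (hleft : ∀ y ∈ Icc c d, ContinuousOn (fun x => f ⟨x, y⟩) (Icc a b))
    (hright : ∀ x ∈ Icc a b, ContinuousOn (fun y => f ⟨x, y⟩) (Icc c d))
    (hC : ∀ z ∈ Icc a b ×ℂ Icc c d, ‖f z‖ ≤ C) :
    IsSepContBdd fun x y => f ⟨projIcc a b hab x, projIcc c d hcd y⟩ where
  continuous_left y := (hleft _ (projIcc c d hcd y).2).comp_continuous
    (continuous_subtype_val.comp continuous_projIcc) fun x => (projIcc a b hab x).2
  continuous_right x := (hright _ (projIcc a b hab x).2).comp_continuous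
    (continuous_subtype_val.comp continuous_projIcc) fun y => (projIcc c d hcd y).2
  bounded := ⟨C, fun x y => hC _ ⟨(projIcc a b hab x).2, (projIcc c d hcd y).2⟩⟩

variable [NormedSpace ℂ E] {w : ℝ → ℝ → E}

lemma IsSepContBdd.exists_mem_axisLipschitzSet (hw : IsSepContBdd w) {g : E} {p : ℝ × ℝ}
    (hg : HasCRDerivAt w g p) : ∃ n : ℕ, p ∈ axisLipschitzSet w n := by
  obtain ⟨C, hC⟩ := hw.bounded
  obtain ⟨K, hK⟩ := exists_dist_le_of_hasDerivAt hg.left fun t => hC t p.2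
  obtain ⟨K', hK'⟩ := exists_dist_le_of_hasDerivAt hg.right fun t => hC p.1 t
  obtain ⟨n, hn⟩ := exists_nat_ge (max K K')
  refine ⟨n, fun t => (hK t).trans ?_, fun t => (hK' t).trans ?_⟩
  · gcongr
    exact (le_max_left K K').trans hn
  · gcongr
    exact (le_max_right K K').trans hn

lemma reProdIm_mem_nhds {X Y : Set ℝ} {x y : ℝ} (hX : X ∈ 𝓝 x) (hY : Y ∈ 𝓝 y) :
    X ×ℂ Y ∈ 𝓝 (⟨x, y⟩ : ℂ) :=
  inter_mem (Complex.continuous_re.continuousAt.preimage_mem_nhds hX)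
    (Complex.continuous_im.continuousAt.preimage_mem_nhds hY)

lemma exists_box_subset_of_mem_nhds {p : ℝ × ℝ} {V : Set (ℝ × ℝ)} (hV : V ∈ 𝓝 p) :
    ∃ a b c d, p.1 ∈ Ioo a b ∧ p.2 ∈ Ioo c d ∧ Icc a b ×ˢ Icc c d ⊆ V := by
  obtain ⟨r, hr, hball⟩ := Metric.nhds_basis_closedBall.mem_iff.1 hV
  rw [← closedBall_prod_same, Real.closedBall_eq_Icc, Real.closedBall_eq_Icc] at hball
  exact ⟨_, _, _, _, ⟨sub_lt_self _ hr, lt_add_of_pos_right _ hr⟩,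
    ⟨sub_lt_self _ hr, lt_add_of_pos_right _ hr⟩, hball⟩

lemma hasCRDerivAt_of_hasLineDerivAt {f : ℂ → E} {g : E} {p : ℝ × ℝ}
    (h₁ : HasLineDerivAt ℝ f g ⟨p.1, p.2⟩ 1)
    (hI : HasLineDerivAt ℝ f (Complex.I • g) ⟨p.1, p.2⟩ Complex.I) :
    HasCRDerivAt (fun x y => f ⟨x, y⟩) g p where
  left := by
    have hline (x : ℝ) : (⟨x, p.2⟩ : ℂ) = ⟨0, p.2⟩ + x • 1 := by apply Complex.ext <;> simp
    rw [hline] at h₁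
    simpa only [← hline] using hasDerivAt_add_smul_of_hasLineDerivAt h₁
  right := by
    have hline (y : ℝ) : (⟨p.1, y⟩ : ℂ) = ⟨p.1, 0⟩ + y • Complex.I := by
      apply Complex.ext <;> simp
    rw [hline] at hI
    simpa only [← hline] using hasDerivAt_add_smul_of_hasLineDerivAt hI

variable [CompleteSpace E]

lemma IsSepContBdd.eventually_differentiableAt_of_axisLipschitz (hw : IsSepContBdd w)
    {p : ℝ × ℝ} {N : ℝ≥0} (hCR : ∀ᶠ q in 𝓝 p, ∃ g, HasCRDerivAt w g q)
    (hN : ∀ᶠ q in 𝓝 p, (∀ᶠ z in 𝓝 (⟨q.1, q.2⟩ : ℂ),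
      DifferentiableAt ℂ (fun z : ℂ => w z.re z.im) z) ∨ q ∈ axisLipschitzSet w N) :
    ∀ᶠ z in 𝓝 (⟨p.1, p.2⟩ : ℂ), DifferentiableAt ℂ (fun z : ℂ => w z.re z.im) z := by
  set G : Set ℂ := {z | ∀ᶠ z' in 𝓝 z, DifferentiableAt ℂ (fun z : ℂ => w z.re z.im) z'}
  have hG : IsOpen ((fun q : ℝ × ℝ => (⟨q.1, q.2⟩ : ℂ)) ⁻¹' G) :=
    isOpen_setOfPred_eventually_nhds.preimage Complex.equivRealProdCLM.symm.continuous
  obtain ⟨x₁, x₂, y₁, y₂, hx, hy, hbox⟩ := exists_box_subset_of_mem_nhds (hCR.and hN)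
  set R := Icc x₁ x₂ ×ˢ Icc y₁ y₂
  have hS : IsCompact (R \ (fun q : ℝ × ℝ => (⟨q.1, q.2⟩ : ℂ)) ⁻¹' G) :=
    (isCompact_Icc.prod isCompact_Icc).diff hG
  choose! D hD using fun q (hq : q ∈ R) => (hbox hq).1
  have hrect : ∀ a ∈ Icc x₁ x₂, ∀ b ∈ Icc x₁ x₂,
      ∀ c ∈ Icc y₁ y₂, ∀ d ∈ Icc y₁ y₂, a ≤ b → c ≤ d →
        rectIntegral w a b c d = 0 := fun a ha b hb c hc d hd hab hcd =>
    hw.rectIntegral_eq_zero_of_isCompact hab hcd hS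
      (fun q hq => (hbox hq.1).2.resolve_left hq.2) (fun q hq => hD q hq.1) fun q hq hqS =>
        (not_not.1 fun hqG => hqS ⟨⟨Icc_subset_Icc ha.1 hb.2 hq.1,
          Icc_subset_Icc hc.1 hd.2 hq.2⟩, hqG⟩ : (⟨q.1, q.2⟩ : ℂ) ∈ G).self_of_nhds
  have hnhds : Icc x₁ x₂ ×ℂ Icc y₁ y₂ ∈ 𝓝 (⟨p.1, p.2⟩ : ℂ) :=
    reProdIm_mem_nhds (Icc_mem_nhds hx.1 hx.2) (Icc_mem_nhds hy.1 hy.2)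
  exact (eventually_mem_nhds_iff.2 hnhds).mono fun z hz =>
    hw.differentiableAt_of_rectIntegral_eq_zero hrect hz

lemma IsSepContBdd.differentiableAt_of_hasCRDerivAt (hw : IsSepContBdd w) {Q : Set (ℝ × ℝ)}
    (hQ : IsOpen Q) (hCR : ∀ p ∈ Q, ∃ g, HasCRDerivAt w g p) {p : ℝ × ℝ} (hp : p ∈ Q) :
    DifferentiableAt ℂ (fun z : ℂ => w z.re z.im) ⟨p.1, p.2⟩ := by
  set G : Set (ℝ × ℝ) := {q | ∀ᶠ z in 𝓝 (⟨q.1, q.2⟩ : ℂ),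
    DifferentiableAt ℂ (fun z : ℂ => w z.re z.im) z}
  have hG : IsOpen G :=
    isOpen_setOfPred_eventually_nhds.preimage Complex.equivRealProdCLM.symm.continuous
  suffices hempty : Q \ G = ∅ from (sdiff_eq_empty.1 hempty hp).self_of_nhds
  by_contra hne
  have : Nonempty ↥(Q \ G) := (nonempty_iff_ne_empty.2 hne).to_subtype
  have : BaireSpace ↥(Q \ G) :=
    (hQ.isGδ.inter hG.isClosed_compl.isGδ).baireSpace_of_t2Space_locallyCompactSpace
  obtain ⟨n, ⟨q, hq⟩, hqn⟩ := nonempty_interior_of_iUnion_of_closed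
    (f := fun n : ℕ => ((↑) : ↥(Q \ G) → ℝ × ℝ) ⁻¹' axisLipschitzSet w n)
    (fun n => (hw.isClosed_axisLipschitzSet n).preimage continuous_subtype_val)
    (eq_univ_of_forall fun q => mem_iUnion.2 <|
      (hCR q q.2.1).elim fun g hg => hw.exists_mem_axisLipschitzSet hg)
  rw [mem_interior_iff_mem_nhds, preimage_coe_mem_nhds_subtype] at hqn
  refine hq.2 (hw.eventually_differentiableAt_of_axisLipschitz
    ((hQ.eventually_mem hq.1).mono hCR) (N := n) ?_)
  filter_upwards [hQ.eventually_mem hq.1, mem_nhdsWithin_iff_eventually.1 hqn] with q' hq' hqn'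
  exact or_iff_not_imp_left.2 fun hG' => hqn' ⟨hq', hG'⟩

lemma differentiableAt_of_isBigO_one_of_hasLineDerivAt {f : ℂ → E} {z₀ : ℂ}
    (hb : f =O[𝓝 z₀] fun _ => (1 : ℝ))
    (hf : ∀ᶠ z in 𝓝 z₀, ∃ g, HasLineDerivAt ℝ f g z 1 ∧
      HasLineDerivAt ℝ f (Complex.I • g) z Complex.I) : DifferentiableAt ℂ f z₀ := by
  obtain ⟨C, hC⟩ := hb.bound
  have hcont : ContinuousAt (fun q : ℝ × ℝ => (⟨q.1, q.2⟩ : ℂ)) (z₀.re, z₀.im) :=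
    Complex.equivRealProdCLM.symm.continuous.continuousAt
  obtain ⟨a, b, c, d, hx₀, hy₀, hbox⟩ := exists_box_subset_of_mem_nhds
    (hcont.preimage_mem_nhds (hC.and hf))
  have hCR : ∀ x ∈ Icc a b, ∀ y ∈ Icc c d,
      ∃ g, HasCRDerivAt (fun x y => f ⟨x, y⟩) g (x, y) := fun x hx y hy =>
    (hbox ⟨hx, hy⟩ : (x, y) ∈ _).2.imp fun g hg => hasCRDerivAt_of_hasLineDerivAt hg.1 hg.2
  have hab : a ≤ b := (hx₀.1.trans hx₀.2).le
  have hcd : c ≤ d := (hy₀.1.trans hy₀.2).le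
  have hw := isSepContBdd_projIcc (f := f) (C := C) hab hcd
    (fun y hy x hx => (hCR x hx y hy).elim fun g hg => hg.left.continuousAt.continuousWithinAt)
    (fun x hx y hy => (hCR x hx y hy).elim fun g hg => hg.right.continuousAt.continuousWithinAt)
    (fun z hz => by simpa using (hbox (a := (z.re, z.im)) hz).1)
  have hfw : ∀ x ∈ Icc a b, ∀ y ∈ Icc c d,
      f ⟨projIcc a b hab x, projIcc c d hcd y⟩ = f ⟨x, y⟩ := fun x hx y hy => by
    rw [projIcc_of_mem hab hx, projIcc_of_mem hcd hy]
  refine (hw.differentiableAt_of_hasCRDerivAt (isOpen_Ioo.prod isOpen_Ioo)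
    (Q := Ioo a b ×ˢ Ioo c d) ?_
    (p := (z₀.re, z₀.im)) ⟨hx₀, hy₀⟩).congr_of_eventuallyEq ?_
  · rintro ⟨x, y⟩ ⟨hx, hy⟩
    obtain ⟨g, hg⟩ := hCR x (Ioo_subset_Icc_self hx) y (Ioo_subset_Icc_self hy)
    refine ⟨g, hg.left.congr_of_eventuallyEq ?_, hg.right.congr_of_eventuallyEq ?_⟩
    · filter_upwards [Icc_mem_nhds hx.1 hx.2] with t ht using hfw t ht y (Ioo_subset_Icc_self hy)
    · filter_upwards [Icc_mem_nhds hy.1 hy.2] with t ht using hfw x (Ioo_subset_Icc_self hx) t ht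
  · filter_upwards [reProdIm_mem_nhds (Icc_mem_nhds hx₀.1 hx₀.2) (Icc_mem_nhds hy₀.1 hy₀.2)]
      with z hz using (hfw z.re hz.1 z.im hz.2).symm

end Tolstov

section ScalarFactorization

variable {V : Type*} [NormedAddCommGroup V] [NormedSpace ℝ V]
  {F : Type*} [NormedAddCommGroup F] [NormedSpace ℂ F]

lemma eq_of_forall_hasLineDerivAt_zero {f : V → F} {s : Set V} (hs : Convex ℝ s) {x y : V}
    (hx : x ∈ s) (hy : y ∈ s) (hf : ∀ z ∈ s, HasLineDerivAt ℝ f 0 z (y - x)) : f y = f x := by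
  have hder : ∀ t ∈ Icc (0 : ℝ) 1, HasDerivAt (fun t : ℝ => f (x + t • (y - x))) 0 t := fun t ht =>
    hasDerivAt_add_smul_of_hasLineDerivAt (hf _ (hs.add_smul_sub_mem hx hy ht))
  simpa using constant_of_has_deriv_right_zero
    (fun t ht => (hder t ht).continuousAt.continuousWithinAt)
    (fun t ht => (hder t (Ico_subset_Icc_self ht)).hasDerivWithinAt) 1 (right_mem_Icc.2 zero_le_one)

lemma exists_analyticAt_eventually_eq_comp [CompleteSpace F] (φ : V →L[ℝ] ℂ)
    (hφ : Function.Surjective φ) {f : V → F} {x₀ : V} (hb : f =O[𝓝 x₀] fun _ => (1 : ℝ))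
    (hf : ∀ᶠ x in 𝓝 x₀, ∃ g : F, ∀ h, HasLineDerivAt ℝ f (φ h • g) x h) :
    ∃ H : ℂ → F, AnalyticAt ℂ H (φ x₀) ∧ ∀ᶠ x in 𝓝 x₀, f x = H (φ x) := by
  obtain ⟨σ, hσ⟩ := (φ : V →ₗ[ℝ] ℂ).exists_rightInverse_of_surjective (LinearMap.range_eq_top.2 hφ)
  have hφσ : ∀ w, φ (σ w) = w := LinearMap.congr_fun hσ
  obtain ⟨C, hC⟩ := hb.bound
  obtain ⟨R, hR, hball⟩ := Metric.eventually_nhds_iff_ball.1 (hC.eventually_nhds.and hf)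
  set p : ℂ → V := fun w => x₀ + σ (w - φ x₀) with hp
  have hpc : Continuous p :=
    continuous_const.add (σ.continuous_of_finiteDimensional.comp (continuous_sub_right _))
  have hp₀ : ∀ᶠ w in 𝓝 (φ x₀), p w ∈ Metric.ball x₀ R :=
    hpc.continuousAt.eventually_mem (by simpa [hp] using Metric.ball_mem_nhds x₀ hR)
  have hline {w v : ℂ} {g : F} (hg : ∀ h, HasLineDerivAt ℝ f (φ h • g) (p w) h) :
      HasLineDerivAt ℝ (fun w => f (p w)) (v • g) w v := by
    have hgv := hg (σ v)
    rw [hφσ] at hgv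
    refine HasDerivAt.congr_of_eventuallyEq hgv (.of_forall fun t => congrArg f ?_)
    simp only [hp, add_sub_right_comm, map_add, map_smul, add_assoc]
  refine ⟨fun w => f (p w), Complex.analyticAt_iff_eventually_differentiableAt.2 ?_, ?_⟩
  · filter_upwards [hp₀] with w hw
    refine differentiableAt_of_isBigO_one_of_hasLineDerivAt (.of_bound C ?_) ?_
    · exact hpc.continuousAt.eventually (hball _ hw).1
    · filter_upwards [hpc.continuousAt.eventually_mem (Metric.isOpen_ball.mem_nhds hw)] with z hz
      obtain ⟨g, hg⟩ := (hball _ hz).2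
      exact ⟨g, by simpa only [one_smul] using hline (v := 1) hg, hline hg⟩
  · filter_upwards [φ.continuous.continuousAt.eventually hp₀, Metric.ball_mem_nhds x₀ hR]
      with x hpx hx
    refine eq_of_forall_hasLineDerivAt_zero (convex_ball x₀ R) hpx hx fun z hz => ?_
    obtain ⟨g, hg⟩ := (hball _ hz).2
    have hker : φ (x - p (φ x)) = 0 := by simp only [hp, map_sub, map_add, hφσ]; ring
    simpa only [hker, zero_smul] using hg (x - p (φ x))

end ScalarFactorization

section PowerSeriesLift

variable {A : Type*} [NormedCommRing A]

lemma norm_pow_le_norm_one_mul (x : A) (n : ℕ) : ‖x ^ n‖ ≤ ‖(1 : A)‖ * ‖x‖ ^ n := by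
  induction n with
  | zero => simp only [pow_zero, mul_one, le_refl]
  | succ n ih =>
    rw [pow_succ, pow_succ, ← mul_assoc]
    exact (norm_mul_le _ _).trans (by gcongr)

variable [NormedAlgebra ℂ A] [CompleteSpace A]

lemma summable_smul_pow {c : ℕ → ℂ} {r : ℝ} (hc : Summable fun n => ‖c n‖ * (n * r ^ (n - 1)))
    {x : A} (hx : ‖x‖ ≤ r) : Summable fun n => c n • x ^ n := by
  refine (hc.mul_left (‖(1 : A)‖ * r)).of_norm_bounded_eventually_nat ?_
  filter_upwards [eventually_ge_atTop 1] with n hn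
  have hr : 0 ≤ r := (norm_nonneg x).trans hx
  calc ‖c n • x ^ n‖ ≤ ‖c n‖ * (‖(1 : A)‖ * r ^ n) := by
        rw [norm_smul]
        gcongr
        exact (norm_pow_le_norm_one_mul x n).trans (by gcongr)
    _ = ‖(1 : A)‖ * r * (‖c n‖ * (1 * r ^ (n - 1))) := by
        rw [← pow_sub_one_mul (Nat.one_le_iff_ne_zero.1 hn)]
        ring
    _ ≤ ‖(1 : A)‖ * r * (‖c n‖ * (n * r ^ (n - 1))) := by
        gcongr
        exact_mod_cast hn

lemma hasFDerivAt_tsum_smul_sub_pow {c : ℕ → ℂ} {r : ℝ}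
    (hc : Summable fun n => ‖c n‖ * (n * r ^ (n - 1))) {z₀ z : A} (hz : z ∈ Metric.ball z₀ r) :
    HasFDerivAt (fun z => ∑' n, c n • (z - z₀) ^ n)
      (ContinuousLinearMap.mul ℂ A (∑' n, c n • (n • (z - z₀) ^ (n - 1)))) z := by
  set d : ℕ → A → A := fun n z => c n • (n • (z - z₀) ^ (n - 1))
  have hterm : ∀ n z, z ∈ Metric.ball z₀ r → HasFDerivAt (fun z => c n • (z - z₀) ^ n)
      (ContinuousLinearMap.mul ℂ A (d n z)) z := fun n z _ => by
    refine ((((hasFDerivAt_id z).sub_const z₀).pow n).const_smul (c n)).congr_fderiv ?_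
    ext h
    simp [d]
  have hd : ∀ n z, z ∈ Metric.ball z₀ r → ‖d n z‖ ≤ ‖(1 : A)‖ * (‖c n‖ * (n * r ^ (n - 1))) := by
    intro n z hz
    have hzr : ‖z - z₀‖ ≤ r := (mem_ball_iff_norm.1 hz).le
    calc ‖d n z‖ ≤ ‖c n‖ * (n * (‖(1 : A)‖ * r ^ (n - 1))) := by
          rw [norm_smul]
          gcongr
          refine norm_nsmul_le.trans ?_
          gcongr
          exact (norm_pow_le_norm_one_mul _ _).trans (by gcongr)
      _ = ‖(1 : A)‖ * (‖c n‖ * (n * r ^ (n - 1))) := by ring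
  have hsum := hc.mul_left ‖(1 : A)‖
  have hr : 0 < r := Metric.pos_of_mem_ball hz
  rw [ContinuousLinearMap.map_tsum _ (.of_norm_bounded hsum fun n => hd n z hz)]
  exact hasFDerivAt_tsum_of_isPreconnected hsum Metric.isOpen_ball
    (convex_ball z₀ r).isPreconnected hterm
    (fun n z hz => (ContinuousLinearMap.opNorm_mul_apply_le ℂ A _).trans (hd n z hz))
    (Metric.mem_ball_self hr) (summable_smul_pow hc (by simpa using hr.le)) hz

lemma exists_summable_norm_coeff_mul {p : FormalMultilinearSeries ℂ ℂ ℂ}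
    (hp : 0 < p.radius) : ∃ r > 0, Summable fun n => ‖p.coeff n‖ * (n * r ^ (n - 1)) := by
  obtain ⟨C, a, hC, ha, hCa⟩ := p.le_mul_pow_of_radius_pos hp
  refine ⟨(2 * a)⁻¹, by positivity, ?_⟩
  refine .of_nonneg_of_le (fun n => by positivity) (fun n => ?_)
    (summable_pow_mul_geometric_of_norm_lt_one (R := ℝ) 1 (r := 1 / 2) (by norm_num) |>.mul_left
      (2 * a * C))
  rcases n with _ | n
  · simp
  · calc ‖p.coeff (n + 1)‖ * ((n + 1 : ℕ) * (2 * a)⁻¹ ^ n)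
        ≤ C * a ^ (n + 1) * ((n + 1 : ℕ) * (2 * a)⁻¹ ^ n) := by
          gcongr
          rw [← FormalMultilinearSeries.norm_apply_eq_norm_coef]
          exact hCa (n + 1)
      _ = 2 * a * C * ((n + 1 : ℕ) ^ 1 * (1 / 2) ^ (n + 1)) := by
          rw [mul_inv, mul_pow, inv_pow a]
          field_simp
          ring

lemma exists_lift_of_analyticAt (φ : A →ₐ[ℂ] ℂ) {H : ℂ → ℂ} {z₀ : A}
    (hH : AnalyticAt ℂ H (φ z₀)) :
    ∃ G : A → A, (∀ᶠ z in 𝓝 z₀, φ (G z) = H (φ z)) ∧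
      ∀ᶠ z in 𝓝 z₀, ∃ L, HasFDerivAt G (ContinuousLinearMap.mul ℂ A L) z := by
  obtain ⟨p, R, hp⟩ := hH
  obtain ⟨r, hr, hsum⟩ := exists_summable_norm_coeff_mul (hp.r_pos.trans_le hp.r_le)
  have hφ : Continuous φ := φ.toContinuousLinearMap.continuous
  refine ⟨fun z => ∑' n, p.coeff n • (z - z₀) ^ n, ?_, ?_⟩
  · filter_upwards [hφ.continuousAt.eventually_mem (Metric.eball_mem_nhds _ hp.r_pos),
      Metric.ball_mem_nhds z₀ hr] with z hφz hz
    refine ((summable_smul_pow hsum (mem_ball_iff_norm.1 hz).le).hasSum.map φ hφ).unique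
      ((hp.hasSum_sub hφz).congr_fun fun n => ?_)
    simp [mul_comm]
  · filter_upwards [Metric.ball_mem_nhds z₀ hr] with z hz
    exact ⟨_, hasFDerivAt_tsum_smul_sub_pow hsum hz⟩

end PowerSeriesLift

section CompositionSeries

variable {K A : Type*} [Field K] [IsAlgClosed K] [CommRing A] [Algebra K A] [FiniteDimensional K A]

lemma exists_linearMap_of_covBy {J' J : Ideal A} (h : J' ⋖ J) :
    ∃ (φ : A →ₐ[K] K) (l : A →ₗ[K] K), (∀ a, ∀ x ∈ J, l (a * x) = φ a * l x) ∧
      (∀ x ∈ J, l x = 0 → x ∈ J') ∧ ∃ x ∈ J, l x = 1 := by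
  obtain ⟨m, hm, ⟨e⟩⟩ := isSimpleModule_iff_quot_maximal.1 ((covBy_iff_quot_is_simple h.le).1 h)
  let ψ : (A ⧸ m) ≃ₐ[K] K := (AlgEquiv.ofBijective (Algebra.ofId K (A ⧸ m))
    IsAlgClosed.algebraMap_bijective_of_isIntegral).symm
  let q : J →ₗ[A] A ⧸ m := e.toLinearMap ∘ₗ Submodule.mkQ _
  obtain ⟨l, hl⟩ := LinearMap.exists_extend (p := J.restrictScalars K)
    (ψ.toLinearMap ∘ₗ q.restrictScalars K)
  have hlq (x : J) : l x = ψ (q x) := LinearMap.congr_fun hl x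
  refine ⟨(ψ : (A ⧸ m) →ₐ[K] K).comp (Ideal.Quotient.mkₐ K m), l, fun a x hx => ?_,
    fun x hx hlx => ?_, ?_⟩
  · have hq : q ⟨a * x, J.mul_mem_left a hx⟩ = Ideal.Quotient.mk m a * q ⟨x, hx⟩ :=
      q.map_smul a ⟨x, hx⟩
    rw [hlq ⟨_, J.mul_mem_left a hx⟩, hlq ⟨x, hx⟩, hq, map_mul]
    rfl
  · rw [hlq ⟨x, hx⟩, map_eq_zero_iff _ ψ.injective] at hlx
    simpa [q] using hlx
  · obtain ⟨x, hx⟩ := (e.surjective.comp (Submodule.mkQ_surjective _)) (ψ.symm 1)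
    exact ⟨x, x.2, by rw [hlq, show q x = _ from hx, ψ.apply_symm_apply]⟩

end CompositionSeries

section Lorch

variable {A : Type*} [NormedCommRing A] [NormedAlgebra ℂ A] {E : Submodule ℝ A} {Φ Ψ : E → A}
  {ζ : E} {L M : A}

/-- Lorch differentiability expressed as Fréchet differentiability, with derivative the
multiplication `h ↦ L * h` restricted to `E`. -/
def HasLorchDerivAt (Φ : E → A) (ζ : E) (L : A) : Prop :=
  HasFDerivAt Φ ((ContinuousLinearMap.mul ℂ A L).restrictScalars ℝ ∘L E.subtypeL) ζ

lemma lorchDiffAt_iff_hasLorchDerivAt {Ω : Set E} (hΩ : Ω ∈ 𝓝 ζ) :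
    LorchDiffAt Ω Φ ζ L ↔ HasLorchDerivAt Φ ζ L := by
  have hev : ∀ᶠ h : E in 𝓝 0, ζ + h ∈ Ω :=
    (continuous_const_add ζ).continuousAt.eventually_mem (by simpa using hΩ)
  rw [HasLorchDerivAt, hasFDerivAt_iff_isLittleO_nhds_zero, Asymptotics.isLittleO_iff]
  refine forall₂_congr fun ε _ => ⟨fun ⟨δ, hδ, h⟩ => ?_, fun h => ?_⟩
  · filter_upwards [hev, Metric.ball_mem_nhds 0 hδ] with v hv hvδ
    simpa [mul_comm] using h v (mem_ball_zero_iff.1 hvδ) hv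
  · obtain ⟨δ, hδ, hball⟩ := Metric.eventually_nhds_iff.1 h
    exact ⟨δ, hδ, fun v hv _ => by simpa [mul_comm] using hball (by simpa using hv)⟩

lemma gateauxDiffAt_iff_forall_hasLineDerivAt {g : A} :
    GateauxDiffAt Φ ζ g ↔ ∀ h : E, HasLineDerivAt ℝ Φ (h * g) ζ h := by
  refine ⟨fun hΦ h => ?_, fun hΦ h => (hΦ h).tendsto_slope_zero_right⟩
  rw [hasLineDerivAt_iff_tendsto_slope_zero, ← nhdsLT_sup_nhdsGT, tendsto_sup]
  refine ⟨?_, hΦ h⟩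
  have hneg : Tendsto Neg.neg (𝓝[<] (0 : ℝ)) (𝓝[>] 0) := by
    simpa using tendsto_neg_nhdsLT (a := (0 : ℝ))
  simpa [Function.comp_def, inv_neg] using ((hΦ (-h)).comp hneg).neg

lemma HasLorchDerivAt.gateauxDiffAt (hΦ : HasLorchDerivAt Φ ζ L) : GateauxDiffAt Φ ζ L :=
  gateauxDiffAt_iff_forall_hasLineDerivAt.2 fun h => by
    simpa [mul_comm] using HasFDerivAt.hasLineDerivAt hΦ h

lemma HasLorchDerivAt.continuousAt (hΦ : HasLorchDerivAt Φ ζ L) : ContinuousAt Φ ζ :=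
  HasFDerivAt.continuousAt hΦ

lemma HasLorchDerivAt.add (hΦ : HasLorchDerivAt Φ ζ L) (hΨ : HasLorchDerivAt Ψ ζ M) :
    HasLorchDerivAt (fun z => Φ z + Ψ z) ζ (L + M) :=
  (HasFDerivAt.add hΦ hΨ).congr_fderiv <| by ext; simp

lemma GateauxDiffAt.sub {g k : A} (hΦ : GateauxDiffAt Φ ζ g) (hΨ : GateauxDiffAt Ψ ζ k) :
    GateauxDiffAt (fun z => Φ z - Ψ z) ζ (g - k) := fun h => by
  rw [mul_sub]
  exact ((hΦ h).sub (hΨ h)).congr fun δ => by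
    rw [← smul_sub, sub_sub_sub_comm]

lemma hasLorchDerivAt_mul_const_of_hasFDerivAt {G : A → A}
    (hG : HasFDerivAt G (ContinuousLinearMap.mul ℂ A L) ζ) (x : A) :
    HasLorchDerivAt (fun z : E => G z * x) ζ (L * x) :=
  (((hG.restrictScalars ℝ).comp ζ E.subtypeL.hasFDerivAt).mul_const' x).congr_fderiv <| by
    ext; simp [mul_left_comm, mul_comm]

lemma IsLocBoundedOn.isBigO_one {Ω : Set E} (hΦ : IsLocBoundedOn Ω Φ) (hΩ : Ω ∈ 𝓝 ζ) :
    Φ =O[𝓝 ζ] fun _ => (1 : ℝ) := by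
  obtain ⟨r, hr, C, hC⟩ := hΦ ζ (mem_of_mem_nhds hΩ)
  refine .of_bound C ?_
  filter_upwards [hΩ, Metric.ball_mem_nhds ζ hr] with z hz hzr
  simpa using hC z hz (mem_ball_iff_norm.1 hzr)

lemma isLocBoundedOn_of_continuousOn {Ω : Set E} (hΦ : ContinuousOn Φ Ω) : IsLocBoundedOn Ω Φ := by
  intro ζ hζ
  obtain ⟨C, hC⟩ := ((hΦ ζ hζ).tendsto.isBigO_one ℝ).bound
  obtain ⟨r, hr, hball⟩ := Metric.mem_nhdsWithin_iff.1 hC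
  exact ⟨r, hr, C, fun z hz hzr => by simpa using hball ⟨mem_ball_iff_norm.2 hzr, hz⟩⟩

end Lorch

section Hille

variable {A : Type*} [NormedCommRing A] [NormedAlgebra ℂ A] [FiniteDimensional ℂ A]
  {E : Submodule ℝ A} {Φ : E → A} {ζ₀ : E}

lemma GateauxDiffAt.hasLineDerivAt_comp {φ : A →ₐ[ℂ] ℂ} {J : Ideal A} {l : A →ₗ[ℂ] ℂ}
    (hφ : Function.Surjective fun x : E => φ x) (hl : ∀ a, ∀ x ∈ J, l (a * x) = φ a * l x) {g : A}
    (hg : GateauxDiffAt Φ ζ₀ g) (hJ : ∀ᶠ ζ in 𝓝 ζ₀, Φ ζ ∈ J) :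
    ∃ c : ℂ, ∀ h : E, HasLineDerivAt ℝ (fun ζ => l (Φ ζ)) (φ h • c) ζ₀ h := by
  have hmem (h : E) : h * g ∈ J := by
    have hline : ∀ᶠ δ : ℝ in 𝓝[>] 0, ζ₀ + δ • h ∈ {ζ | Φ ζ ∈ J} :=
      (Continuous.continuousAt (by fun_prop)).continuousWithinAt.eventually (by simpa using hJ)
    have hclosed : IsClosed (J : Set A) :=
      Submodule.closed_of_finiteDimensional (J.restrictScalars ℂ)
    refine hclosed.mem_of_tendsto (hg h) (hline.mono fun δ hδ => ?_)
    exact ((J.restrictScalars ℂ).restrictScalars ℝ).smul_mem _ (J.sub_mem hδ hJ.self_of_nhds)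
  obtain ⟨u, hu : φ u = 1⟩ := hφ 1
  refine ⟨l (u * g), fun h => ?_⟩
  have hlg : l (h * g) = φ h • l (u * g) := calc
    l (h * g) = l (u * (h * g)) := by rw [hl _ _ (hmem h), hu, one_mul]
    _ = φ h • l (u * g) := by rw [mul_left_comm, hl _ _ (hmem u), smul_eq_mul]
  rw [← hlg]
  exact (l.toContinuousLinearMap.restrictScalars ℝ).hasFDerivAt.comp_hasDerivAt _
    (gateauxDiffAt_iff_forall_hasLineDerivAt.1 hg h)

lemma exists_lift_component (hC : CondC E) {J : Ideal A} {φ : A →ₐ[ℂ] ℂ} {l : A →ₗ[ℂ] ℂ}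
    (hl : ∀ a, ∀ x ∈ J, l (a * x) = φ a * l x) (hb : Φ =O[𝓝 ζ₀] fun _ => (1 : ℝ))
    (hg : ∀ᶠ ζ in 𝓝 ζ₀, ∃ g, GateauxDiffAt Φ ζ g) (hJ : ∀ᶠ ζ in 𝓝 ζ₀, Φ ζ ∈ J) :
    ∃ G : A → A, (∀ᶠ ζ : E in 𝓝 ζ₀, φ (G ζ) = l (Φ ζ)) ∧
      ∀ᶠ ζ : E in 𝓝 ζ₀, ∃ L, HasFDerivAt G (ContinuousLinearMap.mul ℂ A L) ζ := by
  have := FiniteDimensional.complete ℂ A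
  let φE : E →L[ℝ] ℂ := φ.toLinearMap.toContinuousLinearMap.restrictScalars ℝ ∘L E.subtypeL
  obtain ⟨H, hH, hlH⟩ := exists_analyticAt_eventually_eq_comp φE (hC φ) (f := fun ζ => l (Φ ζ))
    ((l.toContinuousLinearMap.isBigO_comp Φ _).trans hb) <| by
    filter_upwards [hg, hJ.eventually_nhds] with ζ ⟨g, hg⟩ hJ
    exact hg.hasLineDerivAt_comp (hC φ) hl hJ
  obtain ⟨G, hφG, hG⟩ := exists_lift_of_analyticAt φ hH
  have hcoe : ContinuousAt ((↑) : E → A) ζ₀ := continuous_subtype_val.continuousAt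
  refine ⟨G, ?_, hcoe.eventually hG⟩
  filter_upwards [hcoe.eventually hφG, hlH] with ζ hφζ hlζ using hφζ.trans hlζ.symm

lemma exists_hasLorchDerivAt_of_eventually_mem (hC : CondC E) (J : Ideal A)
    (hb : Φ =O[𝓝 ζ₀] fun _ => (1 : ℝ)) (hg : ∀ᶠ ζ in 𝓝 ζ₀, ∃ g, GateauxDiffAt Φ ζ g)
    (hJ : ∀ᶠ ζ in 𝓝 ζ₀, Φ ζ ∈ J) : ∃ L, HasLorchDerivAt Φ ζ₀ L := by
  have : IsArtinianRing A := isArtinian_of_tower ℂ inferInstance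
  induction J using WellFoundedLT.induction generalizing Φ with
  | _ J ih =>
  rcases eq_or_ne J ⊥ with rfl | hJ₀
  · refine ⟨0, (hasFDerivAt_const 0 ζ₀).congr_fderiv (by ext; simp) |>.congr_of_eventuallyEq ?_⟩
    filter_upwards [hJ] with ζ hζ using hζ
  obtain ⟨J', hJ'⟩ := exists_covBy_of_wellFoundedGT (isMin_iff_eq_bot.not.2 hJ₀)
  obtain ⟨φ, l, hl, hker, x, hxJ, hx⟩ := exists_linearMap_of_covBy (K := ℂ) hJ'
  obtain ⟨G, hφG, hG⟩ := exists_lift_component hC hl hb hg hJ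
  have hGx : ∀ᶠ ζ in 𝓝 ζ₀, ∃ L, HasLorchDerivAt (fun z : E => G z * x) ζ L :=
    hG.mono fun ζ ⟨L, hL⟩ => ⟨L * x, hasLorchDerivAt_mul_const_of_hasFDerivAt hL x⟩
  obtain ⟨L, hL⟩ := hGx.self_of_nhds
  obtain ⟨M, hM⟩ := ih J' hJ'.lt (Φ := fun ζ => Φ ζ - G ζ * x)
    (hb.sub (hL.continuousAt.tendsto.isBigO_one ℝ))
    (by filter_upwards [hg, hGx] with ζ ⟨g, hg⟩ ⟨L, hL⟩ using ⟨g - L, hg.sub hL.gateauxDiffAt⟩)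
    (by
      filter_upwards [hJ, hφG] with ζ hζ hφζ
      refine hker _ (J.sub_mem hζ (J.mul_mem_left _ hxJ)) ?_
      rw [map_sub, hl _ _ hxJ, hφζ, hx, mul_one, sub_self])
  exact ⟨M + L, by simpa using hM.add hL⟩

theorem hille_analog_equivalences_general (hC : CondC E) {Ω : Set E} (hΩ : IsOpen Ω) (Φ : E → A) :
    ((IsLocBoundedOn Ω Φ ∧ ∀ ζ ∈ Ω, ∃ g : A, GateauxDiffAt Φ ζ g) ↔
      (ContinuousOn Φ Ω ∧ ∀ ζ ∈ Ω, ∃ g : A, GateauxDiffAt Φ ζ g)) ∧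
    ((ContinuousOn Φ Ω ∧ ∀ ζ ∈ Ω, ∃ g : A, GateauxDiffAt Φ ζ g) ↔
      (∀ ζ ∈ Ω, ∃ L : A, LorchDiffAt Ω Φ ζ L)) := by
  have hlorch (hb : IsLocBoundedOn Ω Φ) (hg : ∀ ζ ∈ Ω, ∃ g, GateauxDiffAt Φ ζ g) (ζ : E)
      (hζ : ζ ∈ Ω) : ∃ L, HasLorchDerivAt Φ ζ L :=
    exists_hasLorchDerivAt_of_eventually_mem hC ⊤ (hb.isBigO_one (hΩ.mem_nhds hζ))
      ((hΩ.eventually_mem hζ).mono hg) (.of_forall fun _ => Submodule.mem_top)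
  have hmono (hΦ : ∀ ζ ∈ Ω, ∃ L, HasLorchDerivAt Φ ζ L) :
      ContinuousOn Φ Ω ∧ ∀ ζ ∈ Ω, ∃ g, GateauxDiffAt Φ ζ g :=
    ⟨fun ζ hζ => (hΦ ζ hζ).elim fun _ hL => hL.continuousAt.continuousWithinAt,
      fun ζ hζ => (hΦ ζ hζ).imp fun _ hL => hL.gateauxDiffAt⟩
  have hiff : (∀ ζ ∈ Ω, ∃ L, LorchDiffAt Ω Φ ζ L) ↔ ∀ ζ ∈ Ω, ∃ L, HasLorchDerivAt Φ ζ L :=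
    forall₂_congr fun ζ hζ =>
      exists_congr fun L => lorchDiffAt_iff_hasLorchDerivAt (hΩ.mem_nhds hζ)
  rw [hiff]
  exact ⟨⟨fun ⟨hb, hg⟩ => hmono (hlorch hb hg),
      fun ⟨hc, hg⟩ => ⟨isLocBoundedOn_of_continuousOn hc, hg⟩⟩,
    ⟨fun ⟨hc, hg⟩ => hlorch (isLocBoundedOn_of_continuousOn hc) hg, hmono⟩⟩

end Hille

/-- Theorem 1 (analog of the Hille theorem): under condition (C), for a function
`Φ` on an open set `Ω ⊆ E_k`, local boundedness + Gâteaux differentiability,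
monogeneity (continuity + Gâteaux differentiability), and Lorch differentiability
are all equivalent. -/
theorem hille_analog_equivalences
    {A : Type*} [NormedCommRing A] [NormedAlgebra ℂ A] [FiniteDimensional ℂ A]
    {k : ℕ} (hk : 2 ≤ k) (e : Fin k → A) (he0 : e ⟨0, by omega⟩ = 1)
    (hli : LinearIndependent ℝ e)
    (hC : CondC (Submodule.span ℝ (Set.range e)))
    (Ω : Set (Submodule.span ℝ (Set.range e))) (hΩ : IsOpen Ω)
    (Φ : Submodule.span ℝ (Set.range e) → A) :
    ((IsLocBoundedOn Ω Φ ∧ ∀ ζ ∈ Ω, ∃ g : A, GateauxDiffAt Φ ζ g) ↔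
      (ContinuousOn Φ Ω ∧ ∀ ζ ∈ Ω, ∃ g : A, GateauxDiffAt Φ ζ g)) ∧
    ((ContinuousOn Φ Ω ∧ ∀ ζ ∈ Ω, ∃ g : A, GateauxDiffAt Φ ζ g) ↔
      (∀ ζ ∈ Ω, ∃ L : A, LorchDiffAt Ω Φ ζ L)) :=
  hille_analog_equivalences_general hC hΩ Φ
end
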